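/- arXiv:1511.01075 — 6 statements merged into one kernel-verified Lean document; each statement's English description precedes it below -/
import Mathlib

section
/- Let 𝔽 be an infinite field of characteristic p with 0 < p ≤ n and p ≠ 2, and let d ≥ 1. Then the invariant tr(X₁ X₂ ⋯ X_d) is indecomposable in the algebra R^{O(n)} of matrix O(n)-invariants; that is, tr(X₁⋯X_d) does not lie in the 𝔽-span of products g·h with g, h ∈ R^{O(n)} homogeneous of positive degree. -/
open Matrix
noncomputable section

/-- The polynomial ring `R = 𝔽[x_{ij}(k)]` in `n² d` variables. -/
abbrev Rpoly (𝔽 : Type) [Field 𝔽] (n d : ℕ) : Type :=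
  MvPolynomial (Fin n × Fin n × Fin d) 𝔽

/-- The generic matrix `X_k` with `(X_k)_{ij} = x_{ij}(k)`. -/
def Xgen (𝔽 : Type) [Field 𝔽] (n d : ℕ) (k : Fin d) :
    Matrix (Fin n) (Fin n) (Rpoly 𝔽 n d) :=
  fun i j => MvPolynomial.X (i, j, k)

/-- The symmetric generic matrix `X_k⁺`. -/
def XgenSym (𝔽 : Type) [Field 𝔽] (n d : ℕ) (k : Fin d) :
    Matrix (Fin n) (Fin n) (Rpoly 𝔽 n d) :=
  fun i j => if j ≤ i then MvPolynomial.X (i, j, k) else MvPolynomial.X (j, i, k)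

/-- The skew-symmetric generic matrix `X_k⁻`. -/
def XgenSkew (𝔽 : Type) [Field 𝔽] (n d : ℕ) (k : Fin d) :
    Matrix (Fin n) (Fin n) (Rpoly 𝔽 n d) :=
  fun i j =>
    if j < i then MvPolynomial.X (i, j, k)
    else if i < j then - MvPolynomial.X (j, i, k)
    else 0

/-- `σ_t(A)`, the `t`-th coefficient of the characteristic polynomial of `A`
(so `σ₁ = tr`, `σ_n = det`). -/
def sigmaCoeff {𝔽 : Type} [Field 𝔽] {n d : ℕ} (t : ℕ)
    (A : Matrix (Fin n) (Fin n) (Rpoly 𝔽 n d)) : Rpoly 𝔽 n d :=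
  (-1) ^ t * A.charpoly.coeff (n - t)

/-- The algebra `R^{O(n)}` of matrix `O(n)`-invariants: generated by all `σ_t(A)`,
`1 ≤ t ≤ n`, where `A` is a nonempty product of generic and transposed generic matrices. -/
def invO (𝔽 : Type) [Field 𝔽] (n d : ℕ) : Subalgebra 𝔽 (Rpoly 𝔽 n d) :=
  Algebra.adjoin 𝔽
    {f | ∃ t, 1 ≤ t ∧ t ≤ n ∧
      ∃ w : List (Matrix (Fin n) (Fin n) (Rpoly 𝔽 n d)), w ≠ [] ∧
        (∀ m ∈ w, (∃ k, m = Xgen 𝔽 n d k) ∨ (∃ k, m = (Xgen 𝔽 n d k)ᵀ)) ∧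
        f = sigmaCoeff t w.prod}

/-- The algebra `R₊^{O(n)}`, generated by all `σ_t(A)` for `A` a nonempty product of
symmetric generic matrices. -/
def invOplus (𝔽 : Type) [Field 𝔽] (n d : ℕ) : Subalgebra 𝔽 (Rpoly 𝔽 n d) :=
  Algebra.adjoin 𝔽
    {f | ∃ t, 1 ≤ t ∧ t ≤ n ∧
      ∃ w : List (Matrix (Fin n) (Fin n) (Rpoly 𝔽 n d)), w ≠ [] ∧
        (∀ m ∈ w, ∃ k, m = XgenSym 𝔽 n d k) ∧
        f = sigmaCoeff t w.prod}

/-- The algebra `R₋^{O(n)}`, generated by all `σ_t(A)` for `A` a nonempty product of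
skew-symmetric generic matrices. -/
def invOminus (𝔽 : Type) [Field 𝔽] (n d : ℕ) : Subalgebra 𝔽 (Rpoly 𝔽 n d) :=
  Algebra.adjoin 𝔽
    {f | ∃ t, 1 ≤ t ∧ t ≤ n ∧
      ∃ w : List (Matrix (Fin n) (Fin n) (Rpoly 𝔽 n d)), w ≠ [] ∧
        (∀ m ∈ w, ∃ k, m = XgenSkew 𝔽 n d k) ∧
        f = sigmaCoeff t w.prod}

/-- `f` is decomposable in the subalgebra `A`: it lies in the `𝔽`-span of products `g·h`
with `g, h ∈ A` homogeneous of positive degree. -/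
def Decomposable (𝔽 : Type) [Field 𝔽] {n d : ℕ} (A : Subalgebra 𝔽 (Rpoly 𝔽 n d))
    (f : Rpoly 𝔽 n d) : Prop :=
  f ∈ Submodule.span 𝔽
    {x : Rpoly 𝔽 n d | ∃ g ∈ A, ∃ h ∈ A,
      (∃ i, 0 < i ∧ MvPolynomial.IsHomogeneous g i) ∧
      (∃ j, 0 < j ∧ MvPolynomial.IsHomogeneous h j) ∧ x = g * h}

/-- The ideal generated by the squares of the variables. -/
def sqIdeal (𝔽 : Type) [Field 𝔽] (d : ℕ) : Ideal (MvPolynomial (Fin d) 𝔽) :=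
  Ideal.span ((fun s => MvPolynomial.monomial s (1 : 𝔽)) ''
    (Set.range fun k : Fin d => Finsupp.single k 2))

lemma prod_X_notMem (𝔽 : Type) [Field 𝔽] (d : ℕ) :
    (∏ k : Fin d, (MvPolynomial.X k : MvPolynomial (Fin d) 𝔽)) ∉ sqIdeal 𝔽 d := by
  intro h
  have e : (∏ k : Fin d, (MvPolynomial.X k : MvPolynomial (Fin d) 𝔽)) =
      MvPolynomial.monomial (∑ k : Fin d, Finsupp.single k 1) 1 := by
    rw [MvPolynomial.monomial_sum_one]
    rfl
  rw [e, sqIdeal, MvPolynomial.mem_ideal_span_monomial_image] at h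
  obtain ⟨si, ⟨k, rfl⟩, hk⟩ := h _ (by
    rw [MvPolynomial.mem_support_iff, MvPolynomial.coeff_monomial, if_pos rfl]
    exact one_ne_zero)
  have := hk k
  simp [Finsupp.finsetSum_apply, Finsupp.single_apply] at this

lemma X_mul_prod_sub {S : Type} [CommRing S] {ι : Type} [DecidableEq ι] (T : Finset ι) (s : S)
    (u : ι → S) (hs : s * s = 0) :
    (Polynomial.X : Polynomial S) * ∏ i ∈ T, (Polynomial.X - Polynomial.C (s * u i)) =
      Polynomial.X ^ (T.card + 1) - Polynomial.C (s * ∑ i ∈ T, u i) * Polynomial.X ^ T.card := by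
  induction T using Finset.induction_on with
  | empty => simp
  | insert a T ha ih =>
    rw [Finset.prod_insert ha, Finset.sum_insert ha, Finset.card_insert_of_notMem ha,
      mul_left_comm, ih]
    have h2 : (Polynomial.C s * Polynomial.C s : Polynomial S) = 0 := by
      rw [← Polynomial.C_mul, hs, Polynomial.C_0]
    simp only [Polynomial.C_mul, Polynomial.C_add]
    linear_combination (Polynomial.C (u a) * Polynomial.C (∑ i ∈ T, u i) *
      Polynomial.X ^ T.card) * h2

lemma coeff_charpoly_diag {S : Type} [CommRing S] {n : ℕ} (I : Ideal S) (s : S)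
    (u : Fin n → S) (hs : s * s = 0) (hI : s * ∑ i, u i ∈ I) (m : ℕ) (hm : m < n) :
    (Matrix.diagonal (fun i => s * u i)).charpoly.coeff m ∈ I := by
  have h := X_mul_prod_sub Finset.univ s u hs
  rw [Matrix.charpoly_diagonal, ← Polynomial.coeff_X_mul, h, Polynomial.coeff_sub,
    Polynomial.coeff_X_pow, Polynomial.coeff_C_mul_X_pow, Finset.card_univ, Fintype.card_fin,
    if_neg (by omega)]
  split_ifs
  · simpa using hI
  · simp

section main
variable {𝔽 : Type} [Field 𝔽] {n d : ℕ} {S : Type} [CommRing S] [Algebra 𝔽 S]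

/-- Indicator of the first `p` coordinates. -/
def indP (S : Type) [CommRing S] (n p : ℕ) : Fin n → S := fun i => if (i : ℕ) < p then 1 else 0

/-- The diagonal vectors to substitute. -/
def vv (S : Type) [CommRing S] (n p : ℕ) {d : ℕ} (e k : Fin d) : Fin n → S :=
  if k = e then indP S n 1 else indP S n p

/-- The substitution. -/
def phi (𝔽 : Type) [Field 𝔽] [Algebra 𝔽 S] (n p : ℕ) (a : Fin d → S) (e : Fin d) :
    Rpoly 𝔽 n d →ₐ[𝔽] S :=
  MvPolynomial.aeval fun x => if x.1 = x.2.1 then a x.2.2 * vv S n p e x.2.2 x.1 else 0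

lemma indP_mul (S : Type) [CommRing S] (n p : ℕ) (i : Fin n) :
    indP S n p i * indP S n p i = indP S n p i := by
  unfold indP; split_ifs <;> simp

lemma sum_indP (S : Type) [CommRing S] (n p : ℕ) (hp : p ≤ n) :
    ∑ i, indP S n p i = p := by
  unfold indP
  rw [Finset.sum_boole]
  congr 1
  rw [Fin.card_filter_val_lt]
  omega

lemma phi_X (p : ℕ) (a : Fin d → S) (e k : Fin d) :
    (phi 𝔽 n p a e).mapMatrix (Xgen 𝔽 n d k) =
      Matrix.diagonal (fun i => a k * vv S n p e k i) := by
  ext i j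
  simp [phi, Xgen, Matrix.diagonal_apply]

/-- The invariant property of words. -/
def Good (p : ℕ) (a : Fin d → S) (e : Fin d) (M : Matrix (Fin n) (Fin n) (Rpoly 𝔽 n d)) : Prop :=
  ∃ s u, s * s = 0 ∧ (phi 𝔽 n p a e).mapMatrix M = Matrix.diagonal (fun i => s * u i) ∧
    (u = indP S n p ∨ a e ∣ s)

lemma good_X (p : ℕ) (a : Fin d → S) (ha : ∀ k, a k * a k = 0) (e k : Fin d) :
    Good p a e (Xgen 𝔽 n d k) := by
  refine ⟨a k, vv S n p e k, ha k, phi_X p a e k, ?_⟩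
  by_cases h : k = e
  · right; rw [h]
  · left; simp [vv, h]

lemma good_XT (p : ℕ) (a : Fin d → S) (ha : ∀ k, a k * a k = 0) (e k : Fin d) :
    Good p a e (Xgen 𝔽 n d k)ᵀ := by
  obtain ⟨s, u, h1, h2, h3⟩ := good_X (𝔽 := 𝔽) (n := n) p a ha e k
  refine ⟨s, u, h1, ?_, h3⟩
  have := congrArg Matrix.transpose h2
  rw [Matrix.diagonal_transpose] at this
  rw [← this]
  rfl

lemma good_mul (p : ℕ) (a : Fin d → S) (e : Fin d)
    (M N : Matrix (Fin n) (Fin n) (Rpoly 𝔽 n d)) (hM : Good p a e M) (hN : Good p a e N) :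
    Good p a e (M * N) := by
  obtain ⟨s, u, h1, h2, h3⟩ := hM
  obtain ⟨s', u', h1', h2', h3'⟩ := hN
  refine ⟨s * s', fun i => u i * u' i, ?_, ?_, ?_⟩
  · linear_combination (s' * s') * h1
  · rw [map_mul, h2, h2', Matrix.diagonal_mul_diagonal]
    congr 1; ext i; ring
  · rcases h3 with rfl | h3
    · rcases h3' with rfl | h3'
      · left; ext i; exact indP_mul S n p i
      · right; exact Dvd.dvd.mul_left h3' s
    · right; exact Dvd.dvd.mul_right h3 s'

lemma good_prod (p : ℕ) (a : Fin d → S) (ha : ∀ k, a k * a k = 0) (e : Fin d)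
    (w : List (Matrix (Fin n) (Fin n) (Rpoly 𝔽 n d))) (hw : w ≠ [])
    (h : ∀ m ∈ w, (∃ k, m = Xgen 𝔽 n d k) ∨ (∃ k, m = (Xgen 𝔽 n d k)ᵀ)) :
    Good p a e w.prod := by
  refine List.prod_induction_nonempty _ (good_mul p a e) hw ?_
  intro m hm
  rcases h m hm with ⟨k, rfl⟩ | ⟨k, rfl⟩
  · exact good_X p a ha e k
  · exact good_XT p a ha e k

lemma sigma_mem (p : ℕ) (hp : p ≤ n) (hpS : (p : S) = 0) (a : Fin d → S) (e : Fin d)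
    (M : Matrix (Fin n) (Fin n) (Rpoly 𝔽 n d)) (hM : Good p a e M) (t : ℕ) (ht : 1 ≤ t)
    (htn : t ≤ n) :
    phi 𝔽 n p a e (sigmaCoeff t M) ∈ Ideal.span {a e} := by
  obtain ⟨s, u, h1, h2, h3⟩ := hM
  have hc : phi 𝔽 n p a e (M.charpoly.coeff (n - t)) ∈ Ideal.span {a e} := by
    have := Matrix.charpoly_map M (phi 𝔽 n p a e : Rpoly 𝔽 n d →+* S)
    have h4 : M.map (phi 𝔽 n p a e : Rpoly 𝔽 n d →+* S) = _ := h2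
    rw [h4] at this
    have h5 := congrArg (fun q => Polynomial.coeff q (n - t)) this
    simp only [Polynomial.coeff_map] at h5
    change _ = phi 𝔽 n p a e _ at h5
    rw [← h5]
    refine coeff_charpoly_diag _ s u h1 ?_ _ (by omega)
    rcases h3 with rfl | h3
    · rw [sum_indP S n p hp, hpS, mul_zero]; exact Ideal.zero_mem _
    · exact Ideal.mul_mem_right _ _ (Ideal.mem_span_singleton.2 h3)
  rw [sigmaCoeff, map_mul]
  exact Ideal.mul_mem_left _ _ hc

lemma constCoeff_word (w : List (Matrix (Fin n) (Fin n) (Rpoly 𝔽 n d))) (hw : w ≠ [])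
    (h : ∀ m ∈ w, (∃ k, m = Xgen 𝔽 n d k) ∨ (∃ k, m = (Xgen 𝔽 n d k)ᵀ)) (t : ℕ) (ht : 1 ≤ t)
    (htn : t ≤ n) :
    MvPolynomial.constantCoeff (sigmaCoeff t w.prod) = 0 := by
  have h0 : w.prod.map (MvPolynomial.constantCoeff (σ := Fin n × Fin n × Fin d) (R := 𝔽)) = 0 := by
    refine List.prod_induction_nonempty (fun M : Matrix (Fin n) (Fin n) (Rpoly 𝔽 n d) =>
      M.map (MvPolynomial.constantCoeff (σ := Fin n × Fin n × Fin d) (R := 𝔽)) = 0) ?_ hw ?_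
    · intro M N hM hN
      rw [Matrix.map_mul, hM, zero_mul]
    · intro m hm
      rcases h m hm with ⟨k, rfl⟩ | ⟨k, rfl⟩ <;>
      · ext i j
        simp [Xgen]
  have := Matrix.charpoly_map w.prod (MvPolynomial.constantCoeff (σ := Fin n × Fin n × Fin d) (R := 𝔽))
  rw [h0] at this
  have h5 := congrArg (fun q => Polynomial.coeff q (n - t)) this
  simp only [Polynomial.coeff_map] at h5
  rw [sigmaCoeff, map_mul, ← h5, Matrix.charpoly_zero, Polynomial.coeff_X_pow, Fintype.card_fin,
    if_neg (by omega), mul_zero]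

lemma inv_mem (p : ℕ) (hp : p ≤ n) (hpS : (p : S) = 0) (a : Fin d → S)
    (ha : ∀ k, a k * a k = 0) (e : Fin d) (f : Rpoly 𝔽 n d) (hf : f ∈ invO 𝔽 n d) :
    phi 𝔽 n p a e f - algebraMap 𝔽 S (MvPolynomial.constantCoeff f) ∈ Ideal.span {a e} := by
  induction hf using Algebra.adjoin_induction with
  | mem x hx =>
    obtain ⟨t, ht, htn, w, hw, hm, rfl⟩ := hx
    rw [constCoeff_word w hw hm t ht htn, map_zero, sub_zero]
    exact sigma_mem p hp hpS a e _ (good_prod p a ha e w hw hm) t ht htn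
  | algebraMap r => simp [MvPolynomial.algebraMap_eq]
  | add x y _ _ hx hy =>
    have := Ideal.add_mem _ hx hy
    simp only [map_add]
    convert this using 1; ring
  | mul x y _ _ hx hy =>
    have := Ideal.add_mem _ (Ideal.mul_mem_right (phi 𝔽 n p a e y) _ hx)
      (Ideal.mul_mem_left _ (algebraMap 𝔽 S (MvPolynomial.constantCoeff x)) hy)
    simp only [map_mul]
    convert this using 1; ring

lemma inv_hom_mem (p : ℕ) (hp : p ≤ n) (hpS : (p : S) = 0) (a : Fin d → S)
    (ha : ∀ k, a k * a k = 0) (e : Fin d) (f : Rpoly 𝔽 n d) (hf : f ∈ invO 𝔽 n d)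
    (i : ℕ) (hi : 0 < i) (hh : MvPolynomial.IsHomogeneous f i) :
    a e ∣ phi 𝔽 n p a e f := by
  have := inv_mem p hp hpS a ha e f hf
  have h0 : MvPolynomial.constantCoeff f = 0 := by
    rw [MvPolynomial.constantCoeff_eq]
    refine hh.coeff_eq_zero ?_
    simp; omega
  rwa [h0, map_zero, sub_zero, Ideal.mem_span_singleton] at this

lemma phi_trace (p : ℕ) (hp : 1 ≤ p) (hn : 1 ≤ n) (a : Fin d → S) (e : Fin d) :
    phi 𝔽 n p a e (Matrix.trace (List.ofFn (fun k : Fin d => Xgen 𝔽 n d k)).prod) =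
      ∏ k, a k := by
  have h1 : phi 𝔽 n p a e (Matrix.trace (List.ofFn (fun k : Fin d => Xgen 𝔽 n d k)).prod) =
      Matrix.trace ((phi 𝔽 n p a e).mapMatrix (List.ofFn (fun k : Fin d => Xgen 𝔽 n d k)).prod) := by
    simp [Matrix.trace]
  have h2 : (List.ofFn (fun k : Fin d => Matrix.diagonal (fun i => a k * vv S n p e k i))).prod =
      Matrix.diagonalRingHom (Fin n) S (List.ofFn (fun k : Fin d => fun i => a k * vv S n p e k i)).prod := by
    rw [map_list_prod, List.map_ofFn]; rfl
  rw [h1, map_list_prod, List.map_ofFn]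
  have h3 : ((phi 𝔽 n p a e).mapMatrix ∘ fun k : Fin d => Xgen 𝔽 n d k) =
    fun k : Fin d => Matrix.diagonal (fun i => a k * vv S n p e k i) := by
    ext1 k; exact phi_X p a e k
  rw [h3, h2, List.prod_ofFn]
  change Matrix.trace (Matrix.diagonal _) = _
  rw [Matrix.trace_diagonal]
  simp only [Finset.prod_apply, Finset.prod_mul_distrib, ← Finset.mul_sum]
  rw [Finset.sum_eq_single (⟨0, hn⟩ : Fin n)]
  · have h4 : ∏ k, vv S n p e k ⟨0, hn⟩ = 1 := by
      refine Finset.prod_eq_one ?_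
      intro k _
      have hp' : 0 < p := hp
      by_cases hk : k = e <;> simp [vv, indP, hk, hp']
    rw [h4, mul_one]
  · intro i _ hi
    refine Finset.prod_eq_zero (Finset.mem_univ e) ?_
    have : (i : ℕ) ≠ 0 := fun h => hi (Fin.ext h)
    simp [vv, indP, this]
  · simp

end main

theorem trace_prod_gen_indecomposable
    (𝔽 : Type) [Field 𝔽] [Infinite 𝔽] (n d : ℕ) (hn : 2 ≤ n) (hd : 1 ≤ d)
    (hp0 : 0 < ringChar 𝔽) (hpn : ringChar 𝔽 ≤ n) (hp2 : ringChar 𝔽 ≠ 2) :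
    ¬ Decomposable 𝔽 (invO 𝔽 n d)
      (Matrix.trace (List.ofFn (fun k : Fin d => Xgen 𝔽 n d k)).prod) := by
  intro hdec
  let S := MvPolynomial (Fin d) 𝔽 ⧸ sqIdeal 𝔽 d
  let a : Fin d → S := fun k => Ideal.Quotient.mk (sqIdeal 𝔽 d) (MvPolynomial.X k)
  have ha : ∀ k, a k * a k = 0 := by
    intro k
    change Ideal.Quotient.mk (sqIdeal 𝔽 d) (MvPolynomial.X k * MvPolynomial.X k) = 0
    rw [Ideal.Quotient.eq_zero_iff_mem]
    refine Ideal.subset_span ⟨_, ⟨k, rfl⟩, ?_⟩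
    simp [MvPolynomial.X, MvPolynomial.monomial_mul, ← Finsupp.single_add]
  have hpS : ((ringChar 𝔽 : ℕ) : S) = 0 := by
    rw [← map_natCast (algebraMap 𝔽 S), ringChar.Nat.cast_ringChar, map_zero]
  let e : Fin d := ⟨0, hd⟩
  have hz : ∀ x, Decomposable 𝔽 (invO 𝔽 n d) x → phi 𝔽 n (ringChar 𝔽) a e x = 0 := by
    intro x hx
    induction hx using Submodule.span_induction with
    | mem x hx =>
      obtain ⟨g, hg, h, hh, ⟨i, hi, hgi⟩, ⟨j, hj, hhj⟩, rfl⟩ := hx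
      obtain ⟨u, hu⟩ := inv_hom_mem _ hpn hpS a ha e g hg i hi hgi
      obtain ⟨v, hv⟩ := inv_hom_mem _ hpn hpS a ha e h hh j hj hhj
      rw [map_mul, hu, hv]
      linear_combination (u * v) * ha e
    | zero => exact map_zero _
    | add x y _ _ hx hy => rw [map_add, hx, hy, add_zero]
    | smul c x _ hx => rw [map_smul, hx, smul_zero]
  have h1 := hz _ hdec
  rw [phi_trace _ hp0 (by omega)] at h1
  refine prod_X_notMem 𝔽 d ?_
  rw [← Ideal.Quotient.eq_zero_iff_mem, map_prod]
  exact h1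

end
end

section
/- Let 𝔽 be an infinite field of characteristic p with 0 < p ≤ n/2 and p ≠ 2, and let d ≥ 1 be even. Then the invariant tr(X₁⁻ X₂⁻ ⋯ X_d⁻) is indecomposable in the algebra R₋^{O(n)} of invariants of skew-symmetric matrices; that is, tr(X₁⁻⋯X_d⁻) does not lie in the 𝔽-span of products g·h with g, h ∈ R₋^{O(n)} homogeneous of positive degree. -/
open Matrix
noncomputable section

namespace SkewIndec

/-- The index bijection. -/
def idx (n p : ℕ) (h : 2 * p ≤ n) : (Fin 2 × Fin p) ⊕ Fin (n - 2 * p) ≃ Fin n :=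
  Fintype.equivFinOfCardEq (by simp; omega)

/-- Block diagonal matrix with `p` blocks of size two, padded with zeros. -/
def blk {S : Type} [CommRing S] {n p : ℕ} (h : 2 * p ≤ n)
    (N : Fin p → Matrix (Fin 2) (Fin 2) S) : Matrix (Fin n) (Fin n) S :=
  reindex (idx n p h) (idx n p h) (fromBlocks (blockDiagonal N) 0 0 0)

/-- The standard skew two by two matrix. -/
def J (S : Type) [CommRing S] : Matrix (Fin 2) (Fin 2) S := !![0, -1; 1, 0]

section
variable {S : Type} [CommRing S] {n p : ℕ} (h : 2 * p ≤ n)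

lemma blk_mul (N N' : Fin p → Matrix (Fin 2) (Fin 2) S) :
    blk h N * blk h N' = blk h (fun i => N i * N' i) := by
  simp [blk, fromBlocks_multiply, submatrix_mul_equiv, blockDiagonal_mul]

lemma blk_trace (N : Fin p → Matrix (Fin 2) (Fin 2) S) :
    (blk h N).trace = ∑ i, (N i).trace := by
  simp only [blk, reindex_apply]
  rw [← trace_blockDiagonal]
  unfold Matrix.trace
  simp only [diag_apply, submatrix_apply]
  rw [Equiv.sum_comp (idx n p h).symm
    (fun i => (fromBlocks (blockDiagonal N) 0 0 (0 : Matrix (Fin (n - 2*p)) (Fin (n - 2*p)) S)) i i)]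
  simp

lemma blk_map {T : Type} [CommRing T] (f : S →+* T) (N : Fin p → Matrix (Fin 2) (Fin 2) S) :
    (blk h N).map f = blk h (fun i => (N i).map f) := by
  simp only [blk, reindex_apply, ← submatrix_map, fromBlocks_map, blockDiagonal_map _ _ (map_zero f)]
  simp

lemma blk_transpose (N : Fin p → Matrix (Fin 2) (Fin 2) S) :
    (blk h N)ᵀ = blk h (fun i => (N i)ᵀ) := by
  simp [blk, fromBlocks_transpose, blockDiagonal_transpose]

lemma blk_neg (N : Fin p → Matrix (Fin 2) (Fin 2) S) :
    - (blk h N) = blk h (fun i => - (N i)) := by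
  have : blockDiagonal (fun i => - N i) = - blockDiagonal N := blockDiagonal_neg N
  simp only [blk, reindex_apply, this]
  ext i j
  simp only [Matrix.neg_apply, submatrix_apply]
  rcases (idx n p h).symm i with a | a <;> rcases (idx n p h).symm j with b | b <;> simp

lemma blk_diag (N : Fin p → Matrix (Fin 2) (Fin 2) S) (hN : ∀ i j, N i j j = 0) (i : Fin n) :
    blk h N i i = 0 := by
  simp only [blk, reindex_apply, submatrix_apply]
  rcases (idx n p h).symm i with a | a
  · simp [blockDiagonal_apply, hN]
  · simp

lemma blk_charpoly (N : Matrix (Fin 2) (Fin 2) S) :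
    (blk h (fun _ => N)).charpoly = N.charpoly ^ p * Polynomial.X ^ (n - 2 * p) := by
  rw [blk, charpoly_reindex, charpoly_fromBlocks_zero₁₂, charpoly_zero]
  congr 1
  · have : (blockDiagonal (fun _ : Fin p => N)).charmatrix
        = blockDiagonal (fun _ : Fin p => N.charmatrix) := by
      ext ⟨i, a⟩ ⟨j, b⟩
      by_cases hab : a = b <;> by_cases hij : i = j <;>
        simp [charmatrix_apply, blockDiagonal_apply, hab, hij, diagonal_apply]
    rw [charpoly, this, det_blockDiagonal]
    simp [charpoly]
  · simp

lemma pow_aux (a b : S) (hb : b * b = 0) (k : ℕ) :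
    (a + b) ^ (k + 1) = a ^ (k + 1) + ((k + 1 : ℕ) : S) * a ^ k * b := by
  induction k with
  | zero => simp
  | succ k ih =>
    rw [pow_succ, ih]
    push_cast
    linear_combination ((k : S) + 1) * a ^ k * hb

lemma blk_charpoly_nil (hp : 0 < p) (hpS : (p : S) = 0) (c : S) (hc : c * c = 0)
    (N : Matrix (Fin 2) (Fin 2) S) :
    (blk h (fun _ => c • N)).charpoly = Polynomial.X ^ n := by
  have hS : Nontrivial S ∨ Subsingleton S := (subsingleton_or_nontrivial S).symm
  rcases hS with hS | hS
  swap
  · exact Subsingleton.elim _ _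
  obtain ⟨k, rfl⟩ : ∃ k, p = k + 1 := ⟨p - 1, by omega⟩
  rw [blk_charpoly, charpoly_fin_two]
  have e1 : (Polynomial.X ^ 2 - Polynomial.C (c • N).trace * Polynomial.X
      + Polynomial.C (c • N).det : Polynomial S)
      = Polynomial.X ^ 2 + (- (Polynomial.C c * Polynomial.C N.trace * Polynomial.X)) := by
    have : (c • N).det = 0 := by
      rw [det_smul]; simp [pow_two, hc]
    rw [this]
    simp [trace_smul, sub_eq_add_neg]
  have hcc : (Polynomial.C c * Polynomial.C c : Polynomial S) = 0 := by
    rw [← Polynomial.C_mul, hc, Polynomial.C_0]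
  rw [e1, pow_aux]
  · have : ((k + 1 : ℕ) : Polynomial S) = 0 := by
      rw [← Polynomial.C_eq_natCast, hpS, Polynomial.C_0]
    rw [this]
    rw [zero_mul, zero_mul, add_zero, ← pow_mul, ← pow_add]
    congr 1
    omega
  · linear_combination (Polynomial.C N.trace * Polynomial.X) ^ 2 * hcc

lemma list_blk (l : List (Matrix (Fin n) (Fin n) S)) (hl : l ≠ [])
    (H : ∀ m ∈ l, ∃ c : S, c * c = 0 ∧ ∃ N, m = blk h (fun _ => c • N)) :
    ∃ c : S, c * c = 0 ∧ ∃ N, l.prod = blk h (fun _ => c • N) := by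
  induction l with
  | nil => exact absurd rfl hl
  | cons m l ih =>
    obtain ⟨c, hc, N, hm⟩ := H m (by simp)
    by_cases hl' : l = []
    · subst hl'
      exact ⟨c, hc, N, by simpa using hm⟩
    · obtain ⟨c', hc', N', hm'⟩ := ih hl' (fun m hm => H m (by simp [hm]))
      refine ⟨c * c', by linear_combination c' * c' * hc, N * N', ?_⟩
      rw [List.prod_cons, hm, hm', blk_mul]
      simp [smul_smul, mul_comm]

lemma list_blk' {ι : Type} (l : List ι) (hl : l ≠ []) (N : ι → Fin p → Matrix (Fin 2) (Fin 2) S) :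
    (l.map (fun k => blk h (N k))).prod = blk h (fun i => (l.map (fun k => N k i)).prod) := by
  induction l with
  | nil => exact absurd rfl hl
  | cons m l ih =>
    by_cases hl' : l = []
    · subst hl'; simp
    · rw [List.map_cons, List.prod_cons, ih hl', blk_mul]
      simp

lemma list_smul {ι : Type} (l : List ι) (x : ι → S) (A : Matrix (Fin 2) (Fin 2) S) :
    (l.map (fun k => x k • A)).prod = (l.map x).prod • A ^ l.length := by
  induction l with
  | nil => simp
  | cons m l ih =>
    simp [ih, pow_succ', smul_smul, mul_comm]

end

lemma J_pow (S : Type) [CommRing S] (m : ℕ) : (J S) ^ (m + m) = ((-1) ^ m : S) • 1 := by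
  rw [← two_mul, pow_mul]
  have : (J S) ^ 2 = (-1 : S) • 1 := by
    ext i j
    fin_cases i <;> fin_cases j <;> simp [J, pow_two, Matrix.mul_apply, Fin.sum_univ_two]
  rw [this, smul_pow, one_pow]

section
open MvPolynomial
variable (𝔽 : Type) [Field 𝔽] (n d p : ℕ) (h : 2 * p ≤ n)

/-- The blocks of the specialised matrices. -/
def Nb (k : Fin d) (i : Fin p) : Matrix (Fin 2) (Fin 2) (MvPolynomial (Fin d) 𝔽) :=
  if k.val = 0 ∧ i.val ≠ 0 then 0 else (X k : MvPolynomial (Fin d) 𝔽) • J _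

/-- The specialisation map. -/
def Psi : Rpoly 𝔽 n d →ₐ[𝔽] MvPolynomial (Fin d) 𝔽 :=
  aeval (fun q => blk h (Nb 𝔽 d p q.2.2) q.1 q.2.1)

lemma Nb_transpose (k : Fin d) (i : Fin p) : (Nb 𝔽 d p k i)ᵀ = - Nb 𝔽 d p k i := by
  unfold Nb
  split_ifs
  · simp
  · ext i j
    fin_cases i <;> fin_cases j <;> simp [J]

lemma Psi_X (k : Fin d) : (XgenSkew 𝔽 n d k).map (Psi 𝔽 n d p h) = blk h (Nb 𝔽 d p k) := by
  ext1 i j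
  have hs : (blk h (Nb 𝔽 d p k))ᵀ = - blk h (Nb 𝔽 d p k) := by
    rw [blk_transpose, blk_neg]
    simp only [Nb_transpose]
  have hs' := congrFun (congrFun hs i) j
  simp only [transpose_apply, Matrix.neg_apply] at hs'
  simp only [map_apply, XgenSkew]
  split_ifs with h1 h2
  · simp [Psi]
  · simp [Psi, hs']
  · have : i = j := le_antisymm (not_lt.1 h1) (not_lt.1 h2)
    subst this
    rw [map_zero, blk_diag]
    intro a b
    unfold Nb
    split_ifs
    · simp
    · fin_cases b <;> simp [J]

/-- Ideal of squares. -/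
def I0 : Ideal (MvPolynomial (Fin d) 𝔽) :=
  Ideal.span ((fun s => monomial s (1 : 𝔽)) '' Set.range (fun k : Fin d => Finsupp.single k 2))

/-- Ideal of squares and the first variable. -/
def I1 : Ideal (MvPolynomial (Fin d) 𝔽) :=
  I0 𝔽 d ⊔ Ideal.span {x | ∃ k : Fin d, k.val = 0 ∧ x = X k}

lemma sq_mem (k : Fin d) : (X k * X k : MvPolynomial (Fin d) 𝔽) ∈ I0 𝔽 d := by
  refine Ideal.subset_span ⟨Finsupp.single k 2, ⟨k, rfl⟩, ?_⟩
  simp only [← pow_two, X_pow_eq_monomial]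

lemma I1_mul : I1 𝔽 d * I1 𝔽 d ≤ I0 𝔽 d := by
  have : Ideal.span {x : MvPolynomial (Fin d) 𝔽 | ∃ k : Fin d, k.val = 0 ∧ x = X k}
      * Ideal.span {x | ∃ k : Fin d, k.val = 0 ∧ x = X k} ≤ I0 𝔽 d := by
    rw [Ideal.span_mul_span', Ideal.span_le]
    rintro _ ⟨_, ⟨k, hk, rfl⟩, _, ⟨k', hk', rfl⟩, rfl⟩
    have : k = k' := Fin.ext (hk.trans hk'.symm)
    subst this
    exact sq_mem 𝔽 d k
  rw [I1, Ideal.sup_mul, Ideal.mul_sup, Ideal.mul_sup]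
  refine sup_le (sup_le ?_ ?_) (sup_le ?_ this) <;>
    first | exact Ideal.mul_le_left | exact Ideal.mul_le_right

lemma I1_const (f : MvPolynomial (Fin d) 𝔽) (hf : f ∈ I1 𝔽 d) : constantCoeff f = 0 := by
  have : I1 𝔽 d ≤ RingHom.ker (constantCoeff (σ := Fin d) (R := 𝔽)) := by
    refine sup_le ?_ ?_
    · rw [I0, Ideal.span_le]
      rintro _ ⟨_, ⟨k, rfl⟩, rfl⟩
      simp [RingHom.mem_ker, constantCoeff_monomial]
    · rw [Ideal.span_le]
      rintro _ ⟨k, -, rfl⟩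
      simp [RingHom.mem_ker]
  exact this hf

lemma Psi_const (f : Rpoly 𝔽 n d) : constantCoeff (Psi 𝔽 n d p h f) = constantCoeff f := by
  have hb : ∀ k, (blk h (Nb 𝔽 d p k)).map (constantCoeff (σ := Fin d) (R := 𝔽)) = 0 := by
    intro k
    have h0 : (fun i => (Nb 𝔽 d p k i).map (constantCoeff (σ := Fin d) (R := 𝔽))) = 0 := by
      funext i
      unfold Nb
      split_ifs
      · ext; simp
      · ext; simp
    rw [blk_map, h0]
    simp [blk]
  induction f using MvPolynomial.induction_on with
  | C a => simp [Psi, algebraMap_eq]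
  | add f g hf hg => simp [hf, hg]
  | mul_X f q hf =>
    have := congrFun (congrFun (hb q.2.2) q.1) q.2.1
    simp only [map_apply, Matrix.zero_apply] at this
    simp [Psi, this]

lemma Psi_gen (hp : 0 < p) (hpF : (p : 𝔽) = 0) (t : ℕ) (ht : 1 ≤ t) (htn : t ≤ n)
    (w : List (Matrix (Fin n) (Fin n) (Rpoly 𝔽 n d))) (hw : w ≠ [])
    (H : ∀ m ∈ w, ∃ k, m = XgenSkew 𝔽 n d k) :
    Psi 𝔽 n d p h (sigmaCoeff t w.prod) ∈ I1 𝔽 d := by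
  let π : Rpoly 𝔽 n d →+* MvPolynomial (Fin d) 𝔽 ⧸ I1 𝔽 d :=
    (Ideal.Quotient.mk (I1 𝔽 d)).comp (Psi 𝔽 n d p h : Rpoly 𝔽 n d →+* MvPolynomial (Fin d) 𝔽)
  have hpS : (p : MvPolynomial (Fin d) 𝔽 ⧸ I1 𝔽 d) = 0 := by
    have := congrArg (algebraMap 𝔽 (MvPolynomial (Fin d) 𝔽 ⧸ I1 𝔽 d)) hpF
    simpa using this
  have key : (w.prod.map π).charpoly = Polynomial.X ^ n := by
    have e : w.prod.map π = (w.map (RingHom.mapMatrix π)).prod := by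
      rw [← map_list_prod]; rfl
    obtain ⟨c, hc, N, hN⟩ := list_blk h (w.map (RingHom.mapMatrix π)) (by simpa using hw) (by
      intro m hm
      obtain ⟨m', hm', rfl⟩ := List.mem_map.1 hm
      obtain ⟨k, rfl⟩ := H m' hm'
      refine ⟨Ideal.Quotient.mk _ (X k), ?_, J _, ?_⟩
      · rw [← map_mul, Ideal.Quotient.eq_zero_iff_mem]
        exact (le_sup_left : I0 𝔽 d ≤ I1 𝔽 d) (sq_mem 𝔽 d k)
      · have e2 : RingHom.mapMatrix π (XgenSkew 𝔽 n d k)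
            = ((XgenSkew 𝔽 n d k).map (Psi 𝔽 n d p h)).map (Ideal.Quotient.mk (I1 𝔽 d)) := rfl
        rw [e2, Psi_X, blk_map]
        congr 1
        funext i
        unfold Nb
        split_ifs with hk
        · have : Ideal.Quotient.mk (I1 𝔽 d) (X k) = 0 := by
            rw [Ideal.Quotient.eq_zero_iff_mem]
            exact (le_sup_right : _ ≤ I1 𝔽 d) (Ideal.subset_span ⟨k, hk.1, rfl⟩)
          rw [this]
          ext; simp
        · ext a b
          fin_cases a <;> fin_cases b <;> simp [J]
          ring)
    rw [e, hN]
    exact blk_charpoly_nil h hp hpS c hc N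
  rw [← Ideal.Quotient.eq_zero_iff_mem]
  change π (sigmaCoeff t w.prod) = 0
  rw [sigmaCoeff, map_mul, ← Polynomial.coeff_map, ← charpoly_map, key, Polynomial.coeff_X_pow,
    if_neg (by omega), mul_zero]

lemma Psi_inv (hp : 0 < p) (hpF : (p : 𝔽) = 0) (f : Rpoly 𝔽 n d) (hf : f ∈ invOminus 𝔽 n d) :
    ∃ c : 𝔽, Psi 𝔽 n d p h f - C c ∈ I1 𝔽 d := by
  unfold invOminus at hf
  induction hf using Algebra.adjoin_induction with
  | mem x hx =>
    obtain ⟨t, ht, htn, w, hw, H, rfl⟩ := hx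
    exact ⟨0, by simpa using Psi_gen 𝔽 n d p h hp hpF t ht htn w hw H⟩
  | algebraMap r => exact ⟨r, by simp [algebraMap_eq]⟩
  | add x y _ _ hx hy =>
    obtain ⟨a, ha⟩ := hx
    obtain ⟨b, hb⟩ := hy
    refine ⟨a + b, ?_⟩
    have := add_mem ha hb
    convert this using 1
    simp only [map_add]; ring
  | mul x y _ _ hx hy =>
    obtain ⟨a, ha⟩ := hx
    obtain ⟨b, hb⟩ := hy
    refine ⟨a * b, ?_⟩
    have := add_mem (Ideal.mul_mem_right (Psi 𝔽 n d p h y) _ ha) (Ideal.mul_mem_left _ (C a) hb)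
    convert this using 1
    simp only [map_mul]; ring

lemma Psi_pos (hp : 0 < p) (hpF : (p : 𝔽) = 0) (f : Rpoly 𝔽 n d) (hf : f ∈ invOminus 𝔽 n d)
    (i : ℕ) (hi : 0 < i) (hh : f.IsHomogeneous i) : Psi 𝔽 n d p h f ∈ I1 𝔽 d := by
  obtain ⟨c, hc⟩ := Psi_inv 𝔽 n d p h hp hpF f hf
  have h1 := I1_const 𝔽 d _ hc
  have h2 : constantCoeff f = 0 := by
    rw [constantCoeff_eq]
    apply hh.coeff_eq_zero
    simp; omega
  rw [map_sub, Psi_const, h2, constantCoeff_C, zero_sub, neg_eq_zero] at h1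
  simpa [h1] using hc

lemma Psi_trace (hd : 1 ≤ d) (hp : 0 < p) (m : ℕ) (hm : d = m + m) :
    Psi 𝔽 n d p h (Matrix.trace (List.ofFn (fun k : Fin d => XgenSkew 𝔽 n d k)).prod)
      = C ((-1) ^ m * 2) * ∏ k, X k := by
  have e : Psi 𝔽 n d p h (Matrix.trace (List.ofFn (fun k : Fin d => XgenSkew 𝔽 n d k)).prod)
      = ((List.finRange d).map (fun k => blk h (Nb 𝔽 d p k))).prod.trace := by
    rw [← RingHom.coe_coe, ← AddMonoidHom.coe_coe, AddMonoidHom.map_trace]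
    have : ((List.ofFn (fun k : Fin d => XgenSkew 𝔽 n d k)).prod).map (Psi 𝔽 n d p h)
      = ((List.finRange d).map (fun k => blk h (Nb 𝔽 d p k))).prod := by
      change (AlgHom.mapMatrix (Psi 𝔽 n d p h)) _ = _
      rw [map_list_prod, List.ofFn_eq_map, List.map_map]
      congr 1
      apply List.map_congr_left
      intro k _
      exact Psi_X 𝔽 n d p h k
    rw [← this]
    rfl
  have hne : List.finRange d ≠ [] := by
    intro h0
    have := congrArg List.length h0
    simp at this
    omega
  rw [e, list_blk' h _ hne, blk_trace, Finset.sum_eq_single (⟨0, hp⟩ : Fin p)]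
  · have : (fun k => Nb 𝔽 d p k ⟨0, hp⟩) = fun k => (X k : MvPolynomial (Fin d) 𝔽) • J _ := by
      funext k; simp [Nb]
    rw [this, list_smul, List.length_finRange]
    have hJ : J (MvPolynomial (Fin d) 𝔽) ^ d = ((-1) ^ m : MvPolynomial (Fin d) 𝔽) • 1 := by
      rw [← J_pow, ← hm]
    have hX : ((List.finRange d).map (X : Fin d → MvPolynomial (Fin d) 𝔽)).prod = ∏ k, X k := by
      rw [← List.ofFn_eq_map, List.prod_ofFn]
    rw [hJ, hX, trace_smul, trace_smul, trace_one]
    simp only [smul_eq_mul, Fintype.card_fin, map_mul, map_pow, map_neg, map_one, map_ofNat]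
    push_cast
    ring
  · intro i _ hi
    rw [List.prod_eq_zero]
    · simp
    · refine List.mem_map.2 ⟨⟨0, hd⟩, by simp, ?_⟩
      have : i.val ≠ 0 := fun h0 => hi (Fin.ext h0)
      simp [Nb, this]
  · simp

lemma not_mem (a : 𝔽) (ha : a ≠ 0) :
    (C a * ∏ k, X k : MvPolynomial (Fin d) 𝔽) ∉ I0 𝔽 d := by
  have e : (C a * ∏ k, X k : MvPolynomial (Fin d) 𝔽)
      = monomial (∑ k : Fin d, Finsupp.single k 1) a := by
    simp only [X]
    rw [← monomial_sum_one, C_mul_monomial, mul_one]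
  intro hmem
  rw [e, I0, mem_ideal_span_monomial_image] at hmem
  obtain ⟨_, ⟨k, rfl⟩, hk⟩ := hmem (∑ k : Fin d, Finsupp.single k 1) (by
    classical
    rw [support_monomial, if_neg ha]; simp)
  have := hk k
  simp [Finsupp.finsetSum_apply, Finsupp.single_apply] at this

end

end SkewIndec

theorem trace_prod_skew_indecomposable
    (𝔽 : Type) [Field 𝔽] [Infinite 𝔽] (n d : ℕ) (hn : 2 ≤ n) (hd : 1 ≤ d) (hdeven : Even d)
    (hp0 : 0 < ringChar 𝔽) (hpn : 2 * ringChar 𝔽 ≤ n) (hp2 : ringChar 𝔽 ≠ 2) :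
    ¬ Decomposable 𝔽 (invOminus 𝔽 n d)
      (Matrix.trace (List.ofFn (fun k : Fin d => XgenSkew 𝔽 n d k)).prod) := by
  intro hdec
  have hpF : ((ringChar 𝔽 : ℕ) : 𝔽) = 0 := ringChar.Nat.cast_ringChar
  obtain ⟨m, hm⟩ := hdeven
  have key : ∀ x, Decomposable 𝔽 (invOminus 𝔽 n d) x →
      SkewIndec.Psi 𝔽 n d _ hpn x ∈ SkewIndec.I0 𝔽 d := by
    intro x hx
    unfold Decomposable at hx
    induction hx using Submodule.span_induction with
    | mem x hx =>
      obtain ⟨g, hg, g', hg', ⟨i, hi, hgi⟩, ⟨j, hj, hgj⟩, rfl⟩ := hx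
      rw [map_mul]
      exact SkewIndec.I1_mul 𝔽 d (Ideal.mul_mem_mul
        (SkewIndec.Psi_pos 𝔽 n d _ hpn hp0 hpF g hg i hi hgi)
        (SkewIndec.Psi_pos 𝔽 n d _ hpn hp0 hpF g' hg' j hj hgj))
    | zero => simp
    | add x y _ _ hx hy => rw [map_add]; exact add_mem hx hy
    | smul a x _ hx =>
      rw [map_smul, MvPolynomial.smul_eq_C_mul]
      exact Ideal.mul_mem_left _ _ hx
  have h1 := key _ hdec
  rw [SkewIndec.Psi_trace 𝔽 n d _ hpn hd hp0 m hm] at h1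
  exact SkewIndec.not_mem 𝔽 d _
    (mul_ne_zero (pow_ne_zero _ (neg_ne_zero.2 one_ne_zero)) (Ring.two_ne_zero hp2)) h1

end
end

section
/- Let 𝔽 be an infinite field of characteristic p with 0 < p ≤ n/2 and p ≠ 2, and let d ≥ 1. Suppose coefficients α_{σ,δ} ∈ 𝔽 are given for each permutation σ ∈ S_d and each tuple δ = (δ₁,…,δ_d) ∈ {1,T}^d, and suppose that the linear combination Σ_{σ,δ} α_{σ,δ} · tr(X_{σ(1)}^{δ₁} ⋯ X_{σ(d)}^{δ_d}) is decomposable in R^{O(n)} (i.e., lies in the 𝔽-span of products g·h with g, h ∈ R^{O(n)} homogeneous of positive degree). Then the sum of the coefficients over those terms whose tuple δ is constant vanishes: Σ_{σ ∈ S_d} ( α_{σ,(1,…,1)} + α_{σ,(T,…,T)} ) = 0. -/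
open Matrix
noncomputable section

lemma frame_exists {T : Type} [CommRing T] (n p : ℕ) (h : 2 * p ≤ n) (ι hh : T)
    (hι : ι * ι = -1) (h2 : 2 * hh = 1) :
    ∃ W : Bool → Matrix (Fin n) (Fin p) T,
      ∀ b, (W (!b))ᵀ * W b = 1 ∧ (W b)ᵀ * W b = 0 := by
  let f : Fin p → Fin n := fun j => ⟨j.1, by omega⟩
  let g : Fin p → Fin n := fun j => ⟨j.1 + p, by omega⟩
  let A : Matrix (Fin n) (Fin p) T := (1 : Matrix (Fin n) (Fin n) T).submatrix id f
  let B : Matrix (Fin n) (Fin p) T := (1 : Matrix (Fin n) (Fin n) T).submatrix id g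
  have key : ∀ u v : Fin p → Fin n,
      ((1 : Matrix (Fin n) (Fin n) T).submatrix id u)ᵀ *
        (1 : Matrix (Fin n) (Fin n) T).submatrix id v
        = (1 : Matrix (Fin n) (Fin n) T).submatrix u v := by
    intro u v
    ext i j
    simp [Matrix.mul_apply, Matrix.one_apply]
  have hAA : Aᵀ * A = 1 := by
    rw [key]; ext i j; simp [Matrix.one_apply, f, Fin.ext_iff]
  have hBB : Bᵀ * B = 1 := by
    rw [key]; ext i j; simp [Matrix.one_apply, g, Fin.ext_iff]
  have hAB : Aᵀ * B = 0 := by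
    rw [key]; ext i j
    have : i.1 ≠ j.1 + p := by omega
    simp [Matrix.one_apply, f, g, this]
  have hBA : Bᵀ * A = 0 := by
    rw [key]; ext i j
    have : i.1 + p ≠ j.1 := by omega
    simp [Matrix.one_apply, f, g, this]
  refine ⟨fun b => if b then hh • (A + ι • B) else A - ι • B, ?_⟩
  have e1 : hh * 2 = 1 := by rw [mul_comm]; exact h2
  intro b
  cases b
  · constructor
    · simp [Matrix.add_mul, Matrix.mul_sub, hAA, hBB, hAB, hBA, smul_smul, hι]
      rw [← sub_smul, show hh - ι * (hh * ι) = 1 by linear_combination h2 - hh * hι, one_smul]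
    · simp [Matrix.sub_mul, Matrix.mul_sub, hAA, hBB, hAB, hBA, smul_smul, hι]
  · constructor
    · simp [Matrix.sub_mul, Matrix.mul_add, hAA, hBB, hAB, hBA, smul_smul, hι]
      rw [← sub_eq_add_neg, ← sub_smul,
        show hh - hh * ι * ι = 1 by linear_combination h2 - hh * hι, one_smul]
    · simp [Matrix.add_mul, Matrix.mul_add, hAA, hBB, hAB, hBA, smul_smul]
      rw [← add_smul, show hh * hh + hh * ι * (hh * ι) = 0 by linear_combination hh * hh * hι,
        zero_smul]

/-- The specialised letters. -/
def Lspec {T : Type} [CommRing T] {n p d : ℕ} (W : Bool → Matrix (Fin n) (Fin p) T)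
    (D : Fin d → Matrix (Fin p) (Fin p) T) (x : Bool × Fin d) : Matrix (Fin n) (Fin n) T :=
  W x.1 * D x.2 * (W (!x.1))ᵀ

lemma word_prod {T : Type} [CommRing T] {n p d : ℕ} (W : Bool → Matrix (Fin n) (Fin p) T)
    (hW : ∀ b, (W (!b))ᵀ * W b = 1 ∧ (W b)ᵀ * W b = 0)
    (D : Fin d → Matrix (Fin p) (Fin p) T) (t : List (Bool × Fin d)) :
    ∀ (b : Bool) (k : Fin d), (((b, k) :: t).map (Lspec W D)).prod =
      if ∀ x ∈ t, x.1 = b then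
        W b * (((k :: t.map Prod.snd).map D).prod) * (W (!b))ᵀ else 0 := by
  induction t with
  | nil => intro b k; simp [Lspec]
  | cons y t ih =>
    obtain ⟨b', k'⟩ := y
    intro b k
    rw [List.map_cons, List.prod_cons, ih b' k']
    by_cases hb : b' = b
    · subst hb
      simp only [List.mem_cons, forall_eq_or_imp, true_and]
      split_ifs with h
      · simp only [Lspec, List.map_cons, List.prod_cons]
        calc _ = W b' * D k * ((W (!b'))ᵀ * W b') * (D k' * ((t.map Prod.snd).map D).prod)
                  * (W (!b'))ᵀ := by simp only [Matrix.mul_assoc]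
          _ = _ := by rw [(hW b').1]; simp only [Matrix.mul_assoc, Matrix.one_mul]
      · simp
    · have hb2 : (!b) = b' := by cases b <;> cases b' <;> simp_all
      rw [if_neg (c := ∀ x ∈ (b', k') :: t, x.1 = b) (fun h => hb (h (b', k') (by simp)))]
      split_ifs with h
      · simp only [Lspec]
        rw [hb2]
        calc _ = W b * D k * ((W b')ᵀ * W b') * (((k' :: t.map Prod.snd).map D).prod
                  * (W (!b'))ᵀ) := by simp only [Matrix.mul_assoc]
          _ = _ := by rw [(hW b').2]; simp
      · simp

lemma D_prod {T : Type} [CommRing T] {p d : ℕ} (k0 : Fin d) (a : Fin d → T)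
    (e : Matrix (Fin p) (Fin p) T) (he : e * e = e) (l : List (Fin d)) :
    (l.map (fun k => a k • (if k = k0 then e else 1))).prod
      = (l.map a).prod • (if k0 ∈ l then e else 1) := by
  induction l with
  | nil => simp
  | cons k l ih =>
    rw [List.map_cons, List.prod_cons, ih, List.map_cons, List.prod_cons,
      Matrix.smul_mul, Matrix.mul_smul, smul_smul]
    congr 1
    by_cases h : k = k0
    · subst h
      by_cases h' : k ∈ l <;> simp [h', he]
    · have h2 : ¬ k0 = k := fun q => h q.symm
      by_cases h' : k0 ∈ l <;> simp [h', h, h2]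

lemma charpoly_word {T : Type} [CommRing T] {n p : ℕ} [Fact p.Prime] [CharP T p] [Nontrivial T]
    (hpn : p ≤ n) (W : Bool → Matrix (Fin n) (Fin p) T)
    (hW : ∀ b, (W (!b))ᵀ * W b = 1 ∧ (W b)ᵀ * W b = 0) (b : Bool) (c : T) :
    (W b * (c • (1 : Matrix (Fin p) (Fin p) T)) * (W (!b))ᵀ).charpoly
      = Polynomial.X ^ (n - p) * (Polynomial.X ^ p - Polynomial.C (c ^ p)) := by
  rw [Matrix.charpoly_mul_comm_of_le _ _ (by simpa using hpn), ← Matrix.mul_assoc, (hW b).1,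
    Matrix.one_mul, ← Matrix.diagonal_one, ← Matrix.diagonal_smul, Matrix.charpoly_diagonal]
  simp [sub_pow_char]

lemma charpoly_word_map {T Q : Type} [CommRing T] [CommRing Q] {n p d : ℕ} [Fact p.Prime]
    [CharP T p] [Nontrivial T]
    (hpn : p ≤ n) (W : Bool → Matrix (Fin n) (Fin p) T)
    (hW : ∀ b, (W (!b))ᵀ * W b = 1 ∧ (W b)ᵀ * W b = 0)
    (k0 : Fin d) (a : Fin d → T)
    (e : Matrix (Fin p) (Fin p) T) (he : e * e = e) (π : T →+* Q) (h0 : π (a k0) = 0)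
    (hsq : ∀ k, π (a k) ^ 2 = 0) (l : List (Bool × Fin d)) (hl : l ≠ []) :
    ((l.map (Lspec W (fun k => a k • (if k = k0 then e else 1)))).prod.map π).charpoly
      = Polynomial.X ^ n := by
  obtain ⟨⟨b, k⟩, t, rfl⟩ := List.exists_cons_of_ne_nil hl
  have hz : ((0 : Matrix (Fin n) (Fin n) T).map π).charpoly = Polynomial.X ^ n := by
    rw [Matrix.map_zero _ (map_zero π), Matrix.charpoly_zero, Fintype.card_fin]
  rw [word_prod W hW]
  split_ifs with h
  · rw [D_prod k0 a e he]
    split_ifs with hk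
    · have hc : π (((k :: t.map Prod.snd).map a).prod) = 0 := by
        have := List.dvd_prod (List.mem_map_of_mem (f := a) hk)
        have := map_dvd π this
        rw [h0] at this
        exact zero_dvd_iff.mp this
      rw [← hz]
      congr 1
      ext i j
      rw [Matrix.mul_smul, Matrix.smul_mul]
      simp [-List.map_cons, -List.prod_cons, hc]
    · rw [Matrix.charpoly_map, charpoly_word hpn W hW]
      have hc : π ((((k :: t.map Prod.snd).map a).prod) ^ p) = 0 := by
        have h2 : a k ^ p ∣ (((k :: t.map Prod.snd).map a).prod) ^ p :=
          pow_dvd_pow_of_dvd (by simp) p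
        have h3 : a k ^ 2 ∣ a k ^ p := pow_dvd_pow _ (Fact.out : p.Prime).two_le
        have := map_dvd π (h3.trans h2)
        rw [map_pow, hsq] at this
        exact zero_dvd_iff.mp this
      simp only [Polynomial.map_mul, Polynomial.map_sub, Polynomial.map_pow, Polynomial.map_X,
        Polynomial.map_C, hc, map_zero, sub_zero, ← pow_add]
      congr 1; omega
  · exact hz

/-- The letters of the generic words. -/
def Gletter (𝔽 : Type) [Field 𝔽] (n d : ℕ) (x : Bool × Fin d) :
    Matrix (Fin n) (Fin n) (Rpoly 𝔽 n d) :=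
  if x.1 then (Xgen 𝔽 n d x.2)ᵀ else Xgen 𝔽 n d x.2

/-- If two algebra maps agree on all generators they agree on `invO`; here both kill them. -/
lemma invO_map {𝔽 Q : Type} [Field 𝔽] [CommRing Q] [Algebra 𝔽 Q] {n d : ℕ}
    (ψ : Rpoly 𝔽 n d →ₐ[𝔽] Q)
    (hψ : ∀ l : List (Bool × Fin d), l ≠ [] →
      ((l.map (Gletter 𝔽 n d)).prod.map ψ).charpoly = Polynomial.X ^ n)
    (g : Rpoly 𝔽 n d) (hg : g ∈ invO 𝔽 n d) (i : ℕ) (hi : 0 < i)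
    (hgi : MvPolynomial.IsHomogeneous g i) : ψ g = 0 := by
  let ε : Rpoly 𝔽 n d →ₐ[𝔽] 𝔽 := MvPolynomial.aeval (fun _ => (0 : 𝔽))
  have hε : ∀ l : List (Bool × Fin d), l ≠ [] →
      ((l.map (Gletter 𝔽 n d)).prod.map ε).charpoly = Polynomial.X ^ n := by
    intro l hl
    have : (l.map (Gletter 𝔽 n d)).prod.map ε = 0 := by
      obtain ⟨x, t, rfl⟩ := List.exists_cons_of_ne_nil hl
      have h1 : (Gletter 𝔽 n d x).map ε = 0 := by
        ext i j
        unfold Gletter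
        split_ifs <;> simp [Xgen, ε]
      have h2 := map_mul ε.toRingHom.mapMatrix (Gletter 𝔽 n d x) (t.map (Gletter 𝔽 n d)).prod
      have h3 : ε.toRingHom.mapMatrix (Gletter 𝔽 n d x) = 0 := h1
      rw [h3, zero_mul] at h2
      rw [List.map_cons, List.prod_cons]
      exact h2
    rw [this, Matrix.charpoly_zero, Fintype.card_fin]
  have gen : ∀ {S : Type} [CommRing S] [Algebra 𝔽 S] (χ : Rpoly 𝔽 n d →ₐ[𝔽] S),
      (∀ l : List (Bool × Fin d), l ≠ [] →
      ((l.map (Gletter 𝔽 n d)).prod.map χ).charpoly = Polynomial.X ^ n) →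
      ∀ (t : ℕ), 1 ≤ t → t ≤ n → ∀ l : List (Bool × Fin d), l ≠ [] →
        χ (sigmaCoeff t (l.map (Gletter 𝔽 n d)).prod) = 0 := by
    intro S _ _ χ hχ t h1 h2 l hl
    have := hχ l hl
    have h3 := Matrix.charpoly_map (l.map (Gletter 𝔽 n d)).prod (χ : Rpoly 𝔽 n d →+* S)
    have h4 := congrArg (fun q => q.coeff (n - t)) (h3.symm.trans this)
    simp only [Polynomial.coeff_map, Polynomial.coeff_X_pow] at h4
    rw [if_neg (by omega)] at h4
    unfold sigmaCoeff
    rw [map_mul]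
    erw [h4]
    simp
  have key : invO 𝔽 n d ≤ AlgHom.equalizer ψ ((Algebra.ofId 𝔽 Q).comp ε) := by
    refine Algebra.adjoin_le ?_
    rintro f ⟨t, h1, h2, w, hw, hm, rfl⟩
    have : w ∈ Set.range (List.map (Gletter 𝔽 n d)) := by
      rw [Set.range_list_map]
      intro m hmw
      rcases hm m hmw with ⟨k, rfl⟩ | ⟨k, rfl⟩
      · exact ⟨(false, k), by simp [Gletter]⟩
      · exact ⟨(true, k), by simp [Gletter]⟩
    obtain ⟨l, rfl⟩ := this
    have hl : l ≠ [] := by rintro rfl; exact hw rfl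
    show ψ _ = (Algebra.ofId 𝔽 Q) (ε _)
    rw [gen ψ hψ t h1 h2 l hl, gen ε hε t h1 h2 l hl, map_zero]
  have h5 : ψ g = (Algebra.ofId 𝔽 Q) (ε g) := key hg
  have h6 : ε g = 0 := by
    have : ε g = MvPolynomial.constantCoeff g := by
      simp [ε, MvPolynomial.aeval_zero']
    rw [this, MvPolynomial.constantCoeff_eq]
    by_contra hne
    have := hgi hne
    simp at this
    omega
  rw [h5, h6, map_zero]

theorem sum_constant_coeffs_eq_zero_of_decomposable
    (𝔽 : Type) [Field 𝔽] [Infinite 𝔽] (n d : ℕ) (hn : 2 ≤ n) (hd : 1 ≤ d)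
    (hp0 : 0 < ringChar 𝔽) (hpn : 2 * ringChar 𝔽 ≤ n) (hp2 : ringChar 𝔽 ≠ 2)
    (α : Equiv.Perm (Fin d) → (Fin d → Bool) → 𝔽)
    (hdec : Decomposable 𝔽 (invO 𝔽 n d)
      (∑ σ : Equiv.Perm (Fin d), ∑ δ : Fin d → Bool, α σ δ •
        Matrix.trace (List.ofFn (fun i : Fin d =>
          if δ i then (Xgen 𝔽 n d (σ i))ᵀ else Xgen 𝔽 n d (σ i))).prod)) :
    ∑ σ : Equiv.Perm (Fin d),
      (α σ (fun _ => false) + α σ (fun _ => true)) = 0 := by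
  obtain ⟨p, hp⟩ : ∃ p, p = ringChar 𝔽 := ⟨_, rfl⟩
  rw [← hp] at hp0 hpn hp2
  haveI : CharP 𝔽 p := hp ▸ ringChar.charP 𝔽
  haveI hpr : Fact p.Prime :=
    ⟨(CharP.char_is_prime_or_zero 𝔽 p).resolve_right hp0.ne'⟩
  let K := AlgebraicClosure 𝔽
  haveI : CharP K p := charP_of_injective_algebraMap (algebraMap 𝔽 K).injective p
  let T := MvPolynomial (Fin d) K
  obtain ⟨ι, hι⟩ : ∃ ι : K, ι * ι = -1 := by
    obtain ⟨z, hz⟩ := IsAlgClosed.exists_pow_nat_eq (-1 : K) (n := 2) (by norm_num)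
    exact ⟨z, by rw [← sq, hz]⟩
  have h2 : (2 : K) ≠ 0 := by
    intro h
    have h' : ((2 : ℕ) : K) = 0 := by exact_mod_cast h
    rw [CharP.cast_eq_zero_iff K p] at h'
    exact hp2 ((Nat.prime_dvd_prime_iff_eq hpr.out Nat.prime_two).mp h')
  obtain ⟨W, hW⟩ := frame_exists (T := T) n p hpn (MvPolynomial.C ι) (MvPolynomial.C (2⁻¹))
    (by rw [← map_mul, hι]; simp)
    (by
      have : (2 : T) = MvPolynomial.C 2 := (map_ofNat (MvPolynomial.C (σ := Fin d) (R := K)) 2).symm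
      rw [this, ← map_mul, mul_inv_cancel₀ h2, map_one])
  let k0 : Fin d := ⟨0, hd⟩
  let j0 : Fin p := ⟨0, hp0⟩
  let a : Fin d → T := fun k => MvPolynomial.X k
  let e : Matrix (Fin p) (Fin p) T := Matrix.diagonal (Pi.single j0 1)
  have he : e * e = e := by
    simp only [e, Matrix.diagonal_mul_diagonal]
    congr 1; ext i : 1
    by_cases h : i = j0
    · subst h; simp
    · simp [h]
  have hetr : e.trace = 1 := by simp [e, Matrix.trace_diagonal]
  let D : Fin d → Matrix (Fin p) (Fin p) T := fun k => a k • (if k = k0 then e else 1)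
  have hDt : ∀ k, (D k)ᵀ = D k := by
    intro k
    simp only [D, Matrix.transpose_smul]
    split_ifs <;> simp [e]
  let φ : Rpoly 𝔽 n d →ₐ[𝔽] T := MvPolynomial.aeval (fun x => Lspec W D (false, x.2.2) x.1 x.2.1)
  have hφX : ∀ x : Bool × Fin d, (Gletter 𝔽 n d x).map φ = Lspec W D x := by
    rintro ⟨b, k⟩
    have h1 : (Xgen 𝔽 n d k).map φ = Lspec W D (false, k) := by
      ext i j : 2
      simp [Xgen, φ]
    cases b
    · simpa [Gletter] using h1
    · simp only [Gletter, if_true]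
      rw [Matrix.transpose_map, h1]
      simp [Lspec, Matrix.transpose_mul, hDt, Matrix.mul_assoc]
  have hφl : ∀ l : List (Bool × Fin d),
      (l.map (Gletter 𝔽 n d)).prod.map φ = (l.map (Lspec W D)).prod := by
    intro l
    have := map_list_prod (φ : Rpoly 𝔽 n d →+* T).mapMatrix (l.map (Gletter 𝔽 n d))
    rw [List.map_map] at this
    refine Eq.trans this ?_
    congr 1
    refine List.map_congr_left (fun x _ => ?_)
    exact hφX x
  let s : Set (Fin d →₀ ℕ) := Set.range (fun k => Finsupp.single k 2)
  let I : Ideal T := Ideal.span ((fun s => MvPolynomial.monomial s (1 : K)) '' s)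
  let J : Ideal T := I ⊔ Ideal.span {a k0}
  have hsqI : ∀ k, a k ^ 2 ∈ I := by
    intro k
    refine Ideal.subset_span ⟨Finsupp.single k 2, ⟨k, rfl⟩, ?_⟩
    exact MvPolynomial.X_pow_eq_monomial.symm
  have hJJ : ∀ x ∈ J, ∀ y ∈ J, x * y ∈ I := by
    intro x hx y hy
    obtain ⟨x1, hx1, x2, hx2, rfl⟩ := Submodule.mem_sup.mp hx
    obtain ⟨y1, hy1, y2, hy2, rfl⟩ := Submodule.mem_sup.mp hy
    obtain ⟨u, rfl⟩ := Ideal.mem_span_singleton'.mp hx2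
    obtain ⟨v, rfl⟩ := Ideal.mem_span_singleton'.mp hy2
    have : (x1 + u * a k0) * (y1 + v * a k0)
      = (y1 + v * a k0) * x1 + (u * a k0) * y1 + (u * v) * a k0 ^ 2 := by ring
    rw [this]
    exact I.add_mem (I.add_mem (I.mul_mem_left _ hx1) (I.mul_mem_left _ hy1))
      (I.mul_mem_left _ (hsqI k0))
  let ψ : Rpoly 𝔽 n d →ₐ[𝔽] (T ⧸ J) := (Ideal.Quotient.mkₐ 𝔽 J).comp φ
  have hψ : ∀ l : List (Bool × Fin d), l ≠ [] →
      ((l.map (Gletter 𝔽 n d)).prod.map ψ).charpoly = Polynomial.X ^ n := by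
    intro l hl
    have h1 : (l.map (Gletter 𝔽 n d)).prod.map ψ
        = (l.map (Lspec W D)).prod.map (Ideal.Quotient.mk J) := by
      rw [← hφl l, Matrix.map_map]; rfl
    rw [h1]
    refine charpoly_word_map (by omega) W hW k0 a e he (Ideal.Quotient.mk J) ?_ ?_ l hl
    · rw [Ideal.Quotient.eq_zero_iff_mem]
      exact Ideal.mem_sup_right (Ideal.mem_span_singleton_self _)
    · intro k
      rw [← map_pow, Ideal.Quotient.eq_zero_iff_mem]
      exact Ideal.mem_sup_left (hsqI k)
  have hinJ : ∀ g ∈ invO 𝔽 n d, (∃ i, 0 < i ∧ MvPolynomial.IsHomogeneous g i) → φ g ∈ J := by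
    rintro g hg ⟨i, hi, hgi⟩
    have := invO_map ψ hψ g hg i hi hgi
    exact Ideal.Quotient.eq_zero_iff_mem.mp this
  have hI : ∀ f, Decomposable 𝔽 (invO 𝔽 n d) f → φ f ∈ I := by
    intro f hf
    refine Submodule.span_induction (p := fun f _ => φ f ∈ I) ?_ ?_ ?_ ?_ hf
    · rintro x ⟨g, hg, h, hh, hgi, hhj, rfl⟩
      rw [map_mul]
      exact hJJ _ (hinJ g hg hgi) _ (hinJ h hh hhj)
    · simp
    · intro x y _ _ hx hy
      rw [map_add]; exact I.add_mem hx hy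
    · intro c x _ hx
      rw [map_smul, Algebra.smul_def]
      exact I.mul_mem_left _ hx
  have hmem := hI _ hdec
  have htr : ∀ (σ : Equiv.Perm (Fin d)) (δ : Fin d → Bool),
      φ (Matrix.trace (List.ofFn (fun i : Fin d =>
          if δ i then (Xgen 𝔽 n d (σ i))ᵀ else Xgen 𝔽 n d (σ i))).prod)
        = if ∀ i, δ i = δ k0 then ∏ k, a k else 0 := by
    intro σ δ
    obtain ⟨l, hl⟩ : ∃ l, l = List.ofFn (fun i : Fin d => (δ i, σ i)) := ⟨_, rfl⟩
    have h1 : List.ofFn (fun i : Fin d =>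
          if δ i then (Xgen 𝔽 n d (σ i))ᵀ else Xgen 𝔽 n d (σ i)) = l.map (Gletter 𝔽 n d) := by
      rw [hl, List.map_ofFn]; rfl
    have h2 : φ (Matrix.trace (l.map (Gletter 𝔽 n d)).prod)
        = Matrix.trace ((l.map (Gletter 𝔽 n d)).prod.map φ) := by
      simp [Matrix.trace]
    rw [h1, h2, hφl]
    have hsnd : l.map Prod.snd = List.ofFn σ := by rw [hl, List.map_ofFn]; rfl
    have hfst : (∀ x ∈ l, x.1 = δ k0) ↔ ∀ i, δ i = δ k0 := by
      rw [hl]; simp [List.mem_ofFn]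
    obtain ⟨t, ht⟩ : ∃ t, l = (δ k0, σ k0) :: t := by
      obtain ⟨d', rfl⟩ : ∃ d', d = d' + 1 := ⟨d - 1, by omega⟩
      rw [hl, List.ofFn_succ]
      exact ⟨_, rfl⟩
    have hfst' : (∀ x ∈ t, x.1 = δ k0) ↔ ∀ i, δ i = δ k0 := by
      rw [← hfst, ht]; simp
    have hs2 : σ k0 :: t.map Prod.snd = List.ofFn σ := by rw [← hsnd, ht]; rfl
    rw [ht, word_prod W hW]
    simp only [hfst', hs2]
    split_ifs with h
    · rw [D_prod k0 a e he, if_pos (by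
        rw [List.mem_ofFn]; exact ⟨σ.symm k0, by simp⟩)]
      rw [Matrix.mul_assoc, Matrix.trace_mul_comm, Matrix.mul_assoc, (hW _).1, Matrix.mul_one,
        Matrix.trace_smul, hetr, smul_eq_mul, mul_one, List.map_ofFn, List.prod_ofFn]
      exact Equiv.prod_comp σ a
    · simp
  have hsum : ∀ σ : Equiv.Perm (Fin d), (∑ δ : Fin d → Bool,
      if ∀ i, δ i = δ k0 then α σ δ else 0)
        = α σ (fun _ => false) + α σ (fun _ => true) := by
    intro σ
    have hne : (fun _ : Fin d => false) ≠ (fun _ => true) := fun h => by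
      simpa using congrFun h k0
    rw [← Finset.sum_pair hne, ← Finset.sum_filter]
    refine Finset.sum_congr ?_ (fun _ _ => rfl)
    ext δ
    simp only [Finset.mem_filter, Finset.mem_univ, true_and, Finset.mem_insert,
      Finset.mem_singleton]
    constructor
    · intro h
      cases hb : δ k0
      · left; ext i : 1; rw [h i, hb]
      · right; ext i : 1; rw [h i, hb]
    · rintro (rfl | rfl) <;> simp
  have hval : φ (∑ σ : Equiv.Perm (Fin d), ∑ δ : Fin d → Bool, α σ δ •
        Matrix.trace (List.ofFn (fun i : Fin d =>
          if δ i then (Xgen 𝔽 n d (σ i))ᵀ else Xgen 𝔽 n d (σ i))).prod)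
      = (∑ σ : Equiv.Perm (Fin d),
      (α σ (fun _ => false) + α σ (fun _ => true))) • ∏ k, a k := by
    rw [map_sum, Finset.sum_smul]
    refine Finset.sum_congr rfl (fun σ _ => ?_)
    rw [map_sum, ← hsum σ, Finset.sum_smul]
    refine Finset.sum_congr rfl (fun δ _ => ?_)
    rw [map_smul, htr]
    split_ifs <;> simp
  rw [hval] at hmem
  by_contra hc
  have hmon : ∏ k, a k = MvPolynomial.monomial (∑ k : Fin d, Finsupp.single k 1) (1 : K) := by
    rw [MvPolynomial.monomial_sum_one]
    rfl
  have hm : ∏ k, a k ∈ I := by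
    have := I.mul_mem_left (algebraMap 𝔽 T (∑ σ : Equiv.Perm (Fin d),
      (α σ (fun _ => false) + α σ (fun _ => true)))⁻¹) hmem
    rwa [← Algebra.smul_def, smul_smul, inv_mul_cancel₀ hc, one_smul] at this
  rw [hmon] at hm
  have := MvPolynomial.mem_ideal_span_monomial_image.mp hm (∑ k : Fin d, Finsupp.single k 1)
    (by simp [MvPolynomial.mem_support_iff])
  obtain ⟨_, ⟨k, rfl⟩, hk⟩ := this
  have := hk k
  simp [Finsupp.finset_sum_apply, Finsupp.single_apply] at this

end
end

section
/- Let 𝔽 be an infinite field of characteristic p with 0 < p ≤ n and p ≠ 2, and let d ≥ 1. Then every set S of homogeneous elements that generates R₊^{O(n)} as an 𝔽-algebra contains an element of degree at least d. In particular, the maximal degree D(R₊^{O(n)}) of elements in a minimal homogeneous system of generators of R₊^{O(n)} tends to infinity as d tends to infinity. -/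
open Matrix
noncomputable section

/-- The 0/1 weight of the diagonal position `i` for the `k`-th matrix. -/
def dlt (𝔽 : Type) [Field 𝔽] {n d : ℕ} (p : ℕ) (k : Fin d) (i : Fin n) :
    MvPolynomial (Fin d) 𝔽 :=
  if (k : ℕ) = 0 then (if (i : ℕ) = 0 then 1 else 0) else (if (i : ℕ) < p then 1 else 0)

/-- The value of the specialization on variables. -/
def gsp (𝔽 : Type) [Field 𝔽] (n d p : ℕ) (v : Fin n × Fin n × Fin d) :
    MvPolynomial (Fin d) 𝔽 :=
  if v.1 = v.2.1 then MvPolynomial.X v.2.2 * dlt 𝔽 p v.2.2 v.1 else 0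

/-- The specialization. -/
def psi (𝔽 : Type) [Field 𝔽] (n d p : ℕ) :
    Rpoly 𝔽 n d →ₐ[𝔽] MvPolynomial (Fin d) 𝔽 :=
  MvPolynomial.aeval (gsp 𝔽 n d p)

theorem psi_sym (𝔽 : Type) [Field 𝔽] (n d p : ℕ) (k : Fin d) :
    (XgenSym 𝔽 n d k).map (psi 𝔽 n d p) =
      diagonal (fun i => MvPolynomial.X k * dlt 𝔽 p k i) := by
  ext1 i j
  simp only [Matrix.map_apply, XgenSym, diagonal_apply, psi]
  split_ifs with h1 h2 h2
  · subst h2; simp [gsp]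
  · simp [gsp, h2]
  · subst h2; simp [gsp]
  · simp [gsp, Ne.symm h2]

theorem psi_prod (𝔽 : Type) [Field 𝔽] (n d p : ℕ) (l : List (Fin d)) :
    ((l.map (XgenSym 𝔽 n d)).prod).map (psi 𝔽 n d p) =
      diagonal (fun i => (l.map (fun k => (MvPolynomial.X k : MvPolynomial (Fin d) 𝔽))).prod *
        (l.map (fun k => dlt 𝔽 p k i)).prod) := by
  induction l with
  | nil => 
    ext1 i j
    simp [Matrix.one_apply, diagonal_apply]
  | cons k l ih =>
    rw [List.map_cons, List.prod_cons, Matrix.map_mul, ih, psi_sym, diagonal_mul_diagonal]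
    congr 1
    ext1 i
    simp only [List.map_cons, List.prod_cons]
    ring

theorem dlt_prod (𝔽 : Type) [Field 𝔽] {n d p : ℕ} (hp : 0 < p) (l : List (Fin d)) (hl : l ≠ [])
    (i : Fin n) :
    (l.map (fun k => dlt 𝔽 p k i)).prod =
      if (∃ k ∈ l, (k : ℕ) = 0) then (if (i : ℕ) = 0 then 1 else 0)
      else (if (i : ℕ) < p then 1 else 0) := by
  induction l with
  | nil => exact absurd rfl hl
  | cons k l ih =>
    rcases eq_or_ne l [] with rfl | h
    · simp [dlt]
    · rw [List.map_cons, List.prod_cons, ih h]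
      simp only [List.mem_cons, exists_eq_or_imp, dlt]
      by_cases h1 : (k : ℕ) = 0 <;> by_cases h2 : (∃ k ∈ l, (k : ℕ) = 0) <;>
        by_cases h3 : (i : ℕ) = 0 <;> by_cases h4 : (i : ℕ) < p <;>
        simp only [h1, h2, h3, h4] <;> simp <;> omega

/-- Polynomials all of whose monomials contain `y₀` or are `p`-th powers. -/
def Bsub (𝔽 : Type) [Field 𝔽] (d p : ℕ) (z : Fin d) : Subalgebra 𝔽 (MvPolynomial (Fin d) 𝔽) where
  carrier := {f | ∀ a, f.coeff a ≠ 0 → a z ≠ 0 ∨ ∀ i, p ∣ a i}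
  mul_mem' := by
    intro f g hf hg a ha
    rw [MvPolynomial.coeff_mul] at ha
    obtain ⟨⟨b, c⟩, hbc, hne⟩ := Finset.exists_ne_zero_of_sum_ne_zero ha
    rw [Finset.HasAntidiagonal.mem_antidiagonal] at hbc
    simp only at hbc hne
    subst hbc
    rcases hf b (left_ne_zero_of_mul hne) with h | h
    · left; simp; omega
    rcases hg c (right_ne_zero_of_mul hne) with h' | h'
    · left; simp; omega
    · right; intro i; exact dvd_add (h i) (h' i)
  add_mem' := by
    intro f g hf hg a ha
    rw [MvPolynomial.coeff_add] at ha
    by_cases h : f.coeff a = 0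
    · exact hg a (by simpa [h] using ha)
    · exact hf a h
  algebraMap_mem' := by
    intro r a ha
    rw [MvPolynomial.algebraMap_eq, MvPolynomial.coeff_C] at ha
    right
    intro i
    have : a = 0 := by
      by_contra h
      exact ha (if_neg (Ne.symm h))
    simp [this]

/-- The all-ones exponent. -/
def ones (d : ℕ) : Fin d →₀ ℕ := Finsupp.equivFunOnFinite.symm (fun _ => 1)

/-- Elements of `Bsub` without the monomial `y₀ ⋯ y_{d-1}`. -/
def Csub (𝔽 : Type) [Field 𝔽] (d p : ℕ) (hp : 2 ≤ p) (z : Fin d) :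
    Subalgebra 𝔽 (MvPolynomial (Fin d) 𝔽) where
  carrier := {f | f ∈ Bsub 𝔽 d p z ∧ f.coeff (ones d) = 0}
  mul_mem' := by
    rintro f g ⟨hf, hf1⟩ ⟨hg, hg1⟩
    refine ⟨mul_mem hf hg, ?_⟩
    rw [MvPolynomial.coeff_mul]
    refine Finset.sum_eq_zero ?_
    rintro ⟨b, c⟩ hbc
    rw [Finset.HasAntidiagonal.mem_antidiagonal] at hbc
    simp only at hbc ⊢
    have hi : ∀ i, b i + c i = 1 := fun i => by
      have := DFunLike.congr_fun hbc i
      simpa [ones] using this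
    by_contra hne
    have key : ∀ b : Fin d →₀ ℕ, (∀ i, b i ≤ 1) → (b z ≠ 0 ∨ ∀ i, p ∣ b i) → b z = 0 → b = 0 := by
      intro b hb h hz
      rcases h with h | h
      · exact absurd hz h
      · ext i
        exact Nat.eq_zero_of_dvd_of_lt (h i) (by have := hb i; omega)
    have hbz := hi z
    by_cases h0 : b z = 0
    · have := key b (fun i => by have := hi i; omega) (hf b (left_ne_zero_of_mul hne)) h0
      subst this
      rw [zero_add] at hbc
      subst hbc
      exact right_ne_zero_of_mul hne hg1
    · have := key c (fun i => by have := hi i; omega) (hg c (right_ne_zero_of_mul hne)) (by omega)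
      subst this
      rw [add_zero] at hbc
      subst hbc
      exact left_ne_zero_of_mul hne hf1
  add_mem' := by
    rintro f g ⟨hf, hf1⟩ ⟨hg, hg1⟩
    exact ⟨add_mem hf hg, by simp [hf1, hg1]⟩
  algebraMap_mem' := by
    intro r
    refine ⟨Subalgebra.algebraMap_mem _ r, ?_⟩
    rw [MvPolynomial.algebraMap_eq, MvPolynomial.coeff_C, if_neg]
    intro h
    have := DFunLike.congr_fun h z
    simp [ones] at this

theorem listX (𝔽 : Type) [Field 𝔽] {d : ℕ} (l : List (Fin d)) :
    ∃ m : Fin d →₀ ℕ, (l.map (fun k => (MvPolynomial.X k : MvPolynomial (Fin d) 𝔽))).prod =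
      MvPolynomial.monomial m 1 ∧ ∀ k ∈ l, m k ≠ 0 := by
  induction l with
  | nil => exact ⟨0, by simp⟩
  | cons k l ih =>
    obtain ⟨m, hm, h⟩ := ih
    refine ⟨Finsupp.single k 1 + m, ?_, ?_⟩
    · rw [List.map_cons, List.prod_cons, hm, MvPolynomial.X, MvPolynomial.monomial_mul, one_mul]
    · intro j hj
      rcases List.mem_cons.1 hj with rfl | hj
      · simp
      · have := h j hj
        simp [this]

theorem monomial_mem_Bsub (𝔽 : Type) [Field 𝔽] {d p : ℕ} (z : Fin d) (m : Fin d →₀ ℕ)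
    (h : m z ≠ 0 ∨ ∀ i, p ∣ m i) : MvPolynomial.monomial m (1 : 𝔽) ∈ Bsub 𝔽 d p z := by
  intro a ha
  rw [MvPolynomial.coeff_monomial] at ha
  have : m = a := by
    by_contra h
    exact ha (if_neg h)
  exact this ▸ h

open Polynomial in
theorem C_lift {A : Type} [CommRing A] (B : Subring A) (a : A) (ha : a ∈ B) :
    (C a : A[X]) ∈ lifts B.subtype := by
  rw [Polynomial.mem_lifts]
  exact ⟨C ⟨a, ha⟩, by simp⟩

open Polynomial in
theorem sub_C_lift {A : Type} [CommRing A] (B : Subring A) (a : A) (ha : a ∈ B) (N : ℕ) :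
    (X ^ N - C a : A[X]) ∈ lifts B.subtype := by
  rw [Polynomial.mem_lifts]
  exact ⟨X ^ N - C ⟨a, ha⟩, by simp⟩

open Polynomial in
theorem psi_sigma_mem (𝔽 : Type) [Field 𝔽] (n d p : ℕ) [hp : Fact p.Prime] [CharP 𝔽 p]
    (hpn : p ≤ n) (z : Fin d) (hz : (z : ℕ) = 0)
    (t : ℕ) (l : List (Fin d)) (hl : l ≠ []) :
    psi 𝔽 n d p (sigmaCoeff t (l.map (XgenSym 𝔽 n d)).prod) ∈ Bsub 𝔽 d p z := by
  have h0 : psi 𝔽 n d p (sigmaCoeff t (l.map (XgenSym 𝔽 n d)).prod) =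
      (-1) ^ t * (((l.map (XgenSym 𝔽 n d)).prod).map (psi 𝔽 n d p)).charpoly.coeff (n - t) := by
    have := Matrix.charpoly_map ((l.map (XgenSym 𝔽 n d)).prod) (psi 𝔽 n d p).toRingHom
    rw [sigmaCoeff, map_mul, map_pow, map_neg, map_one]
    have e : ((l.map (XgenSym 𝔽 n d)).prod).map (psi 𝔽 n d p) =
      ((l.map (XgenSym 𝔽 n d)).prod).map (psi 𝔽 n d p).toRingHom := rfl
    rw [e, this, Polynomial.coeff_map]
    rfl
  rw [h0]
  refine mul_mem (pow_mem (neg_mem (one_mem _)) _) ?_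
  rw [psi_prod, charpoly_diagonal]
  obtain ⟨m, hm, hml⟩ := listX 𝔽 l
  simp only [hm, dlt_prod 𝔽 hp.out.pos l hl]
  have main : (∏ i : Fin n, (X - C ((MvPolynomial.monomial m) 1 *
      if ∃ k ∈ l, (k : ℕ) = 0 then if (i : ℕ) = 0 then 1 else 0 else if (i : ℕ) < p then 1 else 0)) :
        (MvPolynomial (Fin d) 𝔽)[X]) ∈ lifts (Bsub 𝔽 d p z).toSubring.subtype := by
    by_cases hk : ∃ k ∈ l, (k : ℕ) = 0
    · simp only [hk, if_true]
      refine Subsemiring.prod_mem _ fun i _ => ?_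
      rw [← pow_one (X : (MvPolynomial (Fin d) 𝔽)[X])]
      refine sub_C_lift _ _ ?_ 1
      split_ifs
      · rw [mul_one]
        refine monomial_mem_Bsub 𝔽 z m (Or.inl ?_)
        obtain ⟨k, hkl, hk0⟩ := hk
        have : k = z := Fin.ext (by omega)
        exact this ▸ hml k hkl
      · rw [mul_zero]; exact zero_mem _
    · simp only [hk, if_false]
      have e : ∀ i : Fin n, (X - C ((MvPolynomial.monomial m) 1 * if (i : ℕ) < p then 1 else 0) :
          (MvPolynomial (Fin d) 𝔽)[X]) =
          if (i : ℕ) < p then X - C ((MvPolynomial.monomial m) 1) else X := by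
        intro i; split_ifs <;> simp
      simp only [e]
      rw [Finset.prod_ite, Finset.prod_const, Finset.prod_const]
      have hc : (Finset.univ.filter (fun i : Fin n => (i : ℕ) < p)).card = p := by
        rw [Fin.card_filter_val_lt]; omega
      rw [hc, sub_pow_char, ← C_pow]
      refine mul_mem (sub_C_lift _ _ ?_ p) (pow_mem (X_mem_lifts _) _)
      rw [MvPolynomial.monomial_pow, one_pow]
      exact monomial_mem_Bsub 𝔽 z _ (Or.inr fun i => by simp)
  rw [lifts_iff_coeff_lifts] at main
  obtain ⟨b, hb⟩ := main (n - t)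
  rw [← hb]
  exact b.2

theorem gsp_deg (𝔽 : Type) [Field 𝔽] (n d p : ℕ) (v : Fin n × Fin n × Fin d) :
    (gsp 𝔽 n d p v).totalDegree ≤ 1 := by
  unfold gsp dlt
  split_ifs <;> simp

theorem psi_deg (𝔽 : Type) [Field 𝔽] (n d p : ℕ) (f : Rpoly 𝔽 n d) :
    (psi 𝔽 n d p f).totalDegree ≤ f.totalDegree := by
  rw [psi, MvPolynomial.aeval_def, MvPolynomial.eval₂_eq]
  refine MvPolynomial.totalDegree_finsetSum_le fun a ha => ?_
  refine (MvPolynomial.totalDegree_mul _ _).trans ?_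
  rw [MvPolynomial.algebraMap_eq, MvPolynomial.totalDegree_C, zero_add]
  refine (MvPolynomial.totalDegree_finsetProd _ _).trans ?_
  refine le_trans (Finset.sum_le_sum fun i _ => ?_) (MvPolynomial.le_totalDegree ha)
  refine (MvPolynomial.totalDegree_pow _ _).trans ?_
  calc _ ≤ a i * 1 := Nat.mul_le_mul_left _ (gsp_deg 𝔽 n d p i)
    _ = _ := mul_one _

theorem psi_trace (𝔽 : Type) [Field 𝔽] (n d p : ℕ) (hp : 0 < p) (hn : 2 ≤ n) (hd : 1 ≤ d) :
    psi 𝔽 n d p (sigmaCoeff 1 ((List.finRange d).map (XgenSym 𝔽 n d)).prod) =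
      MvPolynomial.monomial (ones d) 1 := by
  have : NeZero n := ⟨by omega⟩
  have h1 : ∀ A : Matrix (Fin n) (Fin n) (Rpoly 𝔽 n d), sigmaCoeff 1 A = A.trace := by
    intro A
    rw [Matrix.trace_eq_neg_charpoly_coeff, sigmaCoeff]
    simp
  have h2 : ∀ A : Matrix (Fin n) (Fin n) (Rpoly 𝔽 n d),
      psi 𝔽 n d p A.trace = (A.map (psi 𝔽 n d p)).trace := by
    intro A
    simp [Matrix.trace]
  have hne : List.finRange d ≠ [] := by
    intro h
    have := congrArg List.length h
    simp at this
    omega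
  have hex : ∃ k ∈ List.finRange d, (k : ℕ) = 0 := ⟨⟨0, by omega⟩, by simp, rfl⟩
  rw [h1, h2, psi_prod, Matrix.trace_diagonal]
  simp only [dlt_prod 𝔽 hp _ hne, hex, if_true]
  rw [Finset.sum_eq_single (0 : Fin n)]
  · rw [if_pos (by simp), mul_one, ← List.ofFn_eq_map, List.prod_ofFn, MvPolynomial.monomial_eq]
    simp [ones, Finsupp.prod_fintype]
  · intro i _ hi
    rw [if_neg, mul_zero]
    intro h
    exact hi (Fin.ext (by simpa using h))
  · simp

theorem invOplus_generating_set_degree_ge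
    (𝔽 : Type) [Field 𝔽] [Infinite 𝔽] (n d : ℕ) (hn : 2 ≤ n) (hd : 1 ≤ d)
    (hp0 : 0 < ringChar 𝔽) (hpn : ringChar 𝔽 ≤ n) (hp2 : ringChar 𝔽 ≠ 2)
    (S : Set (Rpoly 𝔽 n d)) (hhom : ∀ f ∈ S, ∃ k, MvPolynomial.IsHomogeneous f k)
    (hgen : Algebra.adjoin 𝔽 S = invOplus 𝔽 n d) :
    ∃ f ∈ S, d ≤ f.totalDegree := by
  set p := ringChar 𝔽 with hpdef
  have : CharP 𝔽 p := ringChar.charP 𝔽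
  have hpp : Fact p.Prime := ⟨(CharP.char_is_prime_or_zero 𝔽 p).resolve_right hp0.ne'⟩
  by_contra! hcon
  let z : Fin d := ⟨0, hd⟩
  have hB : ∀ f ∈ invOplus 𝔽 n d, psi 𝔽 n d p f ∈ Bsub 𝔽 d p z := by
    have : invOplus 𝔽 n d ≤ (Bsub 𝔽 d p z).comap (psi 𝔽 n d p) := by
      refine Algebra.adjoin_le ?_
      rintro f ⟨t, -, -, w, hw, hmem, rfl⟩
      have : w ∈ Set.range (List.map (XgenSym 𝔽 n d)) := by
        rw [Set.range_list_map]
        intro x hx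
        obtain ⟨k, hk⟩ := hmem x hx
        exact ⟨k, hk.symm⟩
      obtain ⟨l, rfl⟩ := this
      exact psi_sigma_mem 𝔽 n d p hpn z rfl t l (by rintro rfl; exact hw rfl)
    exact this
  have hC : invOplus 𝔽 n d ≤ (Csub 𝔽 d p hpp.out.two_le z).comap (psi 𝔽 n d p) := by
    rw [← hgen]
    refine Algebra.adjoin_le ?_
    intro f hf
    refine ⟨hB f (hgen ▸ Algebra.subset_adjoin hf), ?_⟩
    refine MvPolynomial.coeff_eq_zero_of_totalDegree_lt ?_
    refine lt_of_le_of_lt (psi_deg 𝔽 n d p f) (lt_of_lt_of_le (hcon f hf) ?_)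
    have : (ones d).support = Finset.univ := by
      ext i; simp [ones]
    rw [this]
    simp [ones]
  have hmem : sigmaCoeff 1 ((List.finRange d).map (XgenSym 𝔽 n d)).prod ∈ invOplus 𝔽 n d := by
    refine Algebra.subset_adjoin ⟨1, le_rfl, by omega, _, ?_, ?_, rfl⟩
    · intro h
      have := congrArg List.length h
      simp at this
      omega
    · intro m hm
      obtain ⟨k, -, hk⟩ := List.mem_map.1 hm
      exact ⟨k, hk.symm⟩
  have h := (hC hmem).2
  change MvPolynomial.coeff (ones d) (psi 𝔽 n d p _) = 0 at h
  rw [psi_trace 𝔽 n d p hp0 hn hd] at h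
  simp at h

end
end

section
/- Let 𝔽 be an infinite field of characteristic p with 0 < p ≤ n/2 and p ≠ 2, and let d ≥ 1 be even. Then every set S of homogeneous elements that generates R₋^{O(n)} as an 𝔽-algebra contains an element of degree at least d. -/
open Matrix
noncomputable section

theorem aux_charpoly_smul {R : Type} [CommRing R] [IsDomain R] {n : ℕ} (c : R) (hc : c ≠ 0)
    (M : Matrix (Fin n) (Fin n) R) (t : ℕ) (ht : t ≤ n) :
    (c • M).charpoly.coeff (n - t) = c ^ t * M.charpoly.coeff (n - t) := by
  have h : (c • M).charpoly.comp (Polynomial.C c * Polynomial.X)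
      = Polynomial.C (c ^ n) * M.charpoly := by
    have h1 : (Polynomial.compRingHom (Polynomial.C c * Polynomial.X)) (c • M).charpoly
        = Polynomial.C (c ^ n) * M.charpoly := by
      unfold Matrix.charpoly
      rw [RingHom.map_det]
      have : (Polynomial.compRingHom (Polynomial.C c * Polynomial.X)).mapMatrix
          (charmatrix (c • M)) = (Polynomial.C c) • charmatrix M := by
        ext1 i j
        by_cases hij : i = j
        · subst hij
          simp [charmatrix_apply, mul_sub]
        · simp [charmatrix_apply, hij]
      rw [this, Matrix.det_smul]
      simp
    exact h1
  have h2 := congrArg (fun q => Polynomial.coeff q (n - t)) h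
  simp only [Polynomial.comp_C_mul_X_coeff, Polynomial.coeff_C_mul] at h2
  have h3 : c ^ n = c ^ (n - t) * c ^ t := by rw [← pow_add]; congr 1; omega
  rw [h3] at h2
  apply mul_left_cancel₀ (pow_ne_zero (n - t) hc)
  rw [mul_comm, h2]; ring

/-- Polynomials with vanishing coefficients on a suitable set of exponents. -/
def auxAlg (F : Type) [Field F] {ι : Type} (T : Set (ι →₀ ℕ)) (h0 : (0 : ι →₀ ℕ) ∉ T)
    (hT : ∀ a b, a + b ∈ T → a ∈ T ∨ b ∈ T) : Subalgebra F (MvPolynomial ι F) where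
  carrier := {f | ∀ s ∈ T, MvPolynomial.coeff s f = 0}
  mul_mem' := by
    classical
    intro f g hf hg s hs
    rw [MvPolynomial.coeff_mul]
    apply Finset.sum_eq_zero
    rintro ⟨a, b⟩ hab
    rw [Finset.HasAntidiagonal.mem_antidiagonal] at hab
    simp only at hab
    rcases hT a b (hab ▸ hs) with h | h
    · simp [hf a h]
    · simp [hg b h]
  add_mem' := by
    intro f g hf hg s hs
    simp [hf s hs, hg s hs]
  algebraMap_mem' := by
    classical
    intro r s hs
    rw [MvPolynomial.algebraMap_eq, MvPolynomial.coeff_C, if_neg]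
    rintro rfl
    exact h0 hs

/-- The standard skew matrix with `p` blocks. -/
def auxJ (F : Type) [Field F] (n p : ℕ) : Matrix (Fin n) (Fin n) F := fun i j =>
  if j.val = i.val + 1 ∧ i.val % 2 = 0 ∧ i.val < 2 * p then 1
  else if i.val = j.val + 1 ∧ j.val % 2 = 0 ∧ j.val < 2 * p then -1 else 0

/-- The diagonal idempotent. -/
def auxD (F : Type) [Field F] (n q : ℕ) : Matrix (Fin n) (Fin n) F :=
  Matrix.diagonal fun i => if i.val < 2 * q then 1 else 0

theorem auxJ_sq (F : Type) [Field F] (n p : ℕ) (hp : 2 * p ≤ n) :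
    auxJ F n p * auxJ F n p = - auxD F n p := by
  ext i k
  rw [Matrix.mul_apply]
  by_cases hi : i.val < 2 * p
  · rcases Nat.mod_two_eq_zero_or_one i.val with h | h
    · rw [Finset.sum_eq_single (⟨i.val + 1, by omega⟩ : Fin n)]
      · simp only [auxJ, auxD, Matrix.neg_apply, Matrix.diagonal_apply, Fin.ext_iff, true_and]
        split_ifs <;> first | omega | simp
      · intro b _ hb
        have hb' : b.val ≠ i.val + 1 := fun h => hb (Fin.ext h)
        have : auxJ F n p i b = 0 := by
          unfold auxJ
          split_ifs <;> first | omega | rfl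
        rw [this, zero_mul]
      · simp
    · rw [Finset.sum_eq_single (⟨i.val - 1, by omega⟩ : Fin n)]
      · simp only [auxJ, auxD, Matrix.neg_apply, Matrix.diagonal_apply, Fin.ext_iff, true_and]
        split_ifs <;> first | omega | simp
      · intro b _ hb
        have hb' : b.val ≠ i.val - 1 := fun h => hb (Fin.ext h)
        have : auxJ F n p i b = 0 := by
          unfold auxJ
          split_ifs <;> first | omega | rfl
        rw [this, zero_mul]
      · simp
  · rw [Finset.sum_eq_zero]
    · simp [auxD, Matrix.diagonal_apply, hi]
    · intro b _
      have : auxJ F n p i b = 0 := by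
        unfold auxJ
        split_ifs <;> first | omega | rfl
      rw [this, zero_mul]

theorem auxD_mul (F : Type) [Field F] (n p q : ℕ) (hq : q ≤ p) :
    auxD F n q * auxD F n p = auxD F n q := by
  unfold auxD
  rw [Matrix.diagonal_mul_diagonal]
  congr 1
  ext i
  split_ifs <;> first | omega | simp

theorem auxD_mul_J (F : Type) [Field F] (n p : ℕ) :
    auxD F n p * auxJ F n p = auxJ F n p := by
  ext i k
  unfold auxD
  rw [Matrix.diagonal_mul]
  unfold auxJ
  split_ifs <;> first | omega | simp

theorem auxJ_pow_even (F : Type) [Field F] (n p : ℕ) (hp : 2 * p ≤ n) (l : ℕ) :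
    auxJ F n p ^ (2 * (l + 1)) = (-1 : F) ^ (l + 1) • auxD F n p := by
  induction l with
  | zero => simp [sq, auxJ_sq F n p hp]
  | succ l ih =>
    rw [show 2 * (l + 1 + 1) = 2 * (l + 1) + 2 by ring, pow_add, ih, sq, auxJ_sq F n p hp,
      pow_succ (-1 : F) (l + 1)]
    simp [auxD_mul F n p p le_rfl]

theorem auxD_trace (F : Type) [Field F] (n p : ℕ) (hp : 2 * p ≤ n) :
    (auxD F n p).trace = 2 * (p : F) := by
  unfold auxD
  rw [Matrix.trace_diagonal, Finset.sum_boole]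
  have : (Finset.univ.filter fun i : Fin n => i.val < 2 * p).card = 2 * p := by
    rw [Fin.card_filter_val_lt]
    omega
  rw [this]; push_cast; rfl

theorem auxJ_trace (F : Type) [Field F] (n p : ℕ) : (auxJ F n p).trace = 0 := by
  unfold Matrix.trace
  apply Finset.sum_eq_zero
  intro i _
  simp [auxJ]

theorem auxJ_pow_trace (F : Type) [Field F] (n p : ℕ) (hp : 2 * p ≤ n) (hF : (p : F) = 0)
    (m : ℕ) (hm : 0 < m) : (auxJ F n p ^ m).trace = 0 := by
  rcases Nat.even_or_odd' m with ⟨l, h | h⟩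
  · obtain ⟨l, rfl⟩ : ∃ l', l = l' + 1 := ⟨l - 1, by omega⟩
    rw [h, auxJ_pow_even F n p hp, Matrix.trace_smul, auxD_trace F n p hp, hF]; simp
  · subst h
    cases l with
    | zero => simpa using auxJ_trace F n p
    | succ l =>
      rw [pow_succ, auxJ_pow_even F n p hp, smul_mul_assoc, auxD_mul_J, Matrix.trace_smul,
        auxJ_trace, smul_zero]

/-- The evaluation matrices. -/
def auxM (F : Type) [Field F] (n d p : ℕ) (k : Fin d) : Matrix (Fin n) (Fin n) F :=
  if k.val = 0 then auxD F n 1 * auxJ F n p else auxJ F n p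

theorem auxM_skew (F : Type) [Field F] (n d p : ℕ) (k : Fin d) (i j : Fin n) :
    auxM F n d p k i j = - auxM F n d p k j i := by
  unfold auxM
  split_ifs
  · unfold auxD
    rw [Matrix.diagonal_mul, Matrix.diagonal_mul]
    unfold auxJ
    split_ifs <;> first | omega | simp
  · unfold auxJ
    split_ifs <;> first | omega | simp

theorem auxM_diag (F : Type) [Field F] (n d p : ℕ) (k : Fin d) (i : Fin n) :
    auxM F n d p k i i = 0 := by
  unfold auxM
  split_ifs
  · unfold auxD
    rw [Matrix.diagonal_mul]
    simp [auxJ]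
  · simp [auxJ]

/-- The substitution. -/
def auxPhi (F : Type) [Field F] (n d p : ℕ) : Rpoly F n d →ₐ[F] MvPolynomial (Fin d) F :=
  MvPolynomial.aeval fun x => MvPolynomial.X x.2.2 * MvPolynomial.C (auxM F n d p x.2.2 x.1 x.2.1)

theorem auxPhi_skew (F : Type) [Field F] (n d p : ℕ) (k : Fin d) :
    (XgenSkew F n d k).map (auxPhi F n d p : Rpoly F n d →+* MvPolynomial (Fin d) F) =
      (MvPolynomial.X k : MvPolynomial (Fin d) F) • (auxM F n d p k).map
        (MvPolynomial.C : F →+* MvPolynomial (Fin d) F) := by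
  ext1 i j
  simp only [Matrix.map_apply, Matrix.smul_apply, XgenSkew, smul_eq_mul]
  rcases lt_trichotomy j i with h | h | h
  · simp [h, auxPhi]
  · subst h; simp [auxM_diag]
  · rw [if_neg (not_lt.mpr h.le), if_pos h, auxM_skew F n d p k i j]
    simp [auxPhi]

theorem auxPhi_word (F : Type) [Field F] (n d p : ℕ) (ks : List (Fin d)) :
    ((ks.map (XgenSkew F n d)).prod).map (auxPhi F n d p : Rpoly F n d →+* MvPolynomial (Fin d) F) =
      (MvPolynomial.monomial (ks.map fun k => Finsupp.single k 1).sum (1 : F)) •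
        ((ks.map (auxM F n d p)).prod).map (MvPolynomial.C : F →+* MvPolynomial (Fin d) F) := by
  induction ks with
  | nil =>
    simp
    exact (Matrix.map_one _ (map_zero _) (map_one _)).symm
  | cons k ks ih =>
    simp only [List.map_cons, List.prod_cons, List.sum_cons]
    rw [Matrix.map_mul, Matrix.map_mul, ih, auxPhi_skew, smul_mul_smul_comm]
    congr 1
    rw [MvPolynomial.X, MvPolynomial.monomial_mul, one_mul]

theorem auxPhi_sigma (F : Type) [Field F] (n d p t : ℕ) (ht : t ≤ n) (ks : List (Fin d)) :
    auxPhi F n d p (sigmaCoeff t (ks.map (XgenSkew F n d)).prod) =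
      MvPolynomial.monomial (t • (ks.map fun k => Finsupp.single k 1).sum)
        ((-1) ^ t * (ks.map (auxM F n d p)).prod.charpoly.coeff (n - t)) := by
  unfold sigmaCoeff
  rw [map_mul, map_pow, map_neg, map_one]
  have h : auxPhi F n d p ((ks.map (XgenSkew F n d)).prod.charpoly.coeff (n - t)) =
      (((ks.map (XgenSkew F n d)).prod).map
        (auxPhi F n d p : Rpoly F n d →+* MvPolynomial (Fin d) F)).charpoly.coeff (n - t) := by
    rw [Matrix.charpoly_map, Polynomial.coeff_map]; rfl
  rw [h, auxPhi_word, aux_charpoly_smul _ (by simp) _ t ht, Matrix.charpoly_map,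
    Polynomial.coeff_map, MvPolynomial.monomial_pow, one_pow, mul_comm (MvPolynomial.monomial _ _), ← mul_assoc]
  have h2 : ((-1) ^ t : MvPolynomial (Fin d) F) = MvPolynomial.C ((-1) ^ t) := by simp
  rw [h2, ← MvPolynomial.C_mul, MvPolynomial.C_mul_monomial, mul_one]

theorem invOminus_generating_set_degree_ge
    (𝔽 : Type) [Field 𝔽] [Infinite 𝔽] (n d : ℕ) (hn : 2 ≤ n) (hd : 1 ≤ d) (hdeven : Even d)
    (hp0 : 0 < ringChar 𝔽) (hpn : 2 * ringChar 𝔽 ≤ n) (hp2 : ringChar 𝔽 ≠ 2)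
    (S : Set (Rpoly 𝔽 n d)) (hhom : ∀ f ∈ S, ∃ k, MvPolynomial.IsHomogeneous f k)
    (hgen : Algebra.adjoin 𝔽 S = invOminus 𝔽 n d) :
    ∃ f ∈ S, d ≤ f.totalDegree := by
  classical
  by_contra hcon
  push Not at hcon
  set p := ringChar 𝔽 with hp
  have hp1 : 1 ≤ p := hp0
  have hpF : (p : 𝔽) = 0 := ringChar.Nat.cast_ringChar
  have h2F : (2 : 𝔽) ≠ 0 := Ring.two_ne_zero hp2
  haveI : Nonempty (Fin n) := ⟨⟨0, by omega⟩⟩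
  let z : Fin d := ⟨0, by omega⟩
  let one : Fin d →₀ ℕ := Finsupp.equivFunOnFinite.symm fun _ => 1
  have hone : ∀ k, one k = 1 := fun k => rfl
  let T1 : Set (Fin d →₀ ℕ) := {s | (∀ k, s k ≤ 1) ∧ s z = 0 ∧ s ≠ 0}
  let T2 : Set (Fin d →₀ ℕ) := {s | s ∈ T1 ∨ s = one}
  have hone0 : one ≠ 0 := fun h => by
    have := hone z
    rw [h] at this; simp at this
  have h01 : (0 : Fin d →₀ ℕ) ∉ T1 := fun h => h.2.2 rfl
  have h02 : (0 : Fin d →₀ ℕ) ∉ T2 := by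
    rintro (h | h)
    · exact h01 h
    · exact hone0 h.symm
  have hT1 : ∀ a b, a + b ∈ T1 → a ∈ T1 ∨ b ∈ T1 := by
    rintro a b ⟨h1, h2, h3⟩
    simp only [Finsupp.add_apply] at h1 h2
    by_cases ha : a = 0
    · right
      refine ⟨fun k => by have := h1 k; omega, by omega, ?_⟩
      rintro rfl; simp [ha] at h3
    · left
      exact ⟨fun k => by have := h1 k; omega, by omega, ha⟩
  have hT2 : ∀ a b, a + b ∈ T2 → a ∈ T2 ∨ b ∈ T2 := by
    rintro a b (h | h)
    · exact (hT1 a b h).imp Or.inl Or.inl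
    · have hk : ∀ k, a k + b k = 1 := fun k => by rw [← Finsupp.add_apply, h, hone]
      by_cases ha : a = 0
      · right; right; rw [← h, ha, zero_add]
      by_cases hb : b = 0
      · left; right; rw [← h, hb, add_zero]
      by_cases haz : a z = 0
      · left; left
        exact ⟨fun k => by have := hk k; omega, haz, ha⟩
      · right; left
        exact ⟨fun k => by have := hk k; omega, by have := hk z; omega, hb⟩
  have hword : ∀ w : List (Matrix (Fin n) (Fin n) (Rpoly 𝔽 n d)),
      (∀ m ∈ w, ∃ k, m = XgenSkew 𝔽 n d k) → ∃ ks : List (Fin d), w = ks.map (XgenSkew 𝔽 n d) := by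
    intro w hw
    induction w with
    | nil => exact ⟨[], rfl⟩
    | cons m w ih =>
      obtain ⟨k, rfl⟩ := hw m (by simp)
      obtain ⟨ks, rfl⟩ := ih fun m hm => hw m (by simp [hm])
      exact ⟨k :: ks, rfl⟩
  -- images of invariants
  have hA1 : invOminus 𝔽 n d ≤ (auxAlg 𝔽 T1 h01 hT1).comap (auxPhi 𝔽 n d p) := by
    apply Algebra.adjoin_le
    rintro f ⟨t, ht1, htn, w, hw0, hw, rfl⟩
    obtain ⟨ks, rfl⟩ := hword w hw
    rintro s ⟨hs1, hsz, hs0⟩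
    have e := auxPhi_sigma 𝔽 n d p t htn ks
    change MvPolynomial.coeff s (auxPhi 𝔽 n d p _) = 0
    rw [e, MvPolynomial.coeff_monomial]
    split_ifs with hse
    · have hcount : ∀ k, (ks.map fun k => Finsupp.single k 1).sum k = ks.count k := by
        intro k
        clear hse e hw hw0
        induction ks with
        | nil => simp
        | cons a ks ih =>
          simp only [List.map_cons, List.sum_cons, Finsupp.add_apply, ih, List.count_cons,
            Finsupp.single_apply, beq_iff_eq]
          omega
      have hsk : ∀ k, s k = t * ks.count k := by
        intro k
        rw [← hse, Finsupp.smul_apply, hcount, smul_eq_mul]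
      have hks : ks ≠ [] := by rintro rfl; simp at hw0
      have hz : z ∉ ks := by
        intro h
        have h1 := List.count_pos_iff.mpr h
        have h2 := hsk z
        rw [hsz] at h2
        have := Nat.mul_pos ht1 h1
        omega
      have ht : t = 1 := by
        obtain ⟨k, hk⟩ := List.exists_mem_of_ne_nil _ hks
        have h1 := List.count_pos_iff.mpr hk
        have h2 := hsk k
        have h3 := hs1 k
        have : t * 1 ≤ t * ks.count k := Nat.mul_le_mul_left _ h1
        omega
      subst ht
      have hM : ks.map (auxM 𝔽 n d p) = List.replicate ks.length (auxJ 𝔽 n p) := by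
        rw [List.eq_replicate_iff]
        refine ⟨by simp, ?_⟩
        intro b hb
        obtain ⟨k, hk, rfl⟩ := List.mem_map.mp hb
        unfold auxM
        rw [if_neg]
        intro h
        exact hz ((Fin.ext h : k = z) ▸ hk)
      have htr := Matrix.trace_eq_neg_charpoly_coeff (auxJ 𝔽 n p ^ ks.length)
      rw [auxJ_pow_trace 𝔽 n p hpn hpF _ (List.length_pos_of_ne_nil hks), Fintype.card_fin] at htr
      rw [hM, List.prod_replicate, neg_eq_zero.mp htr.symm, mul_zero]
    · rfl
  have hA2 : Algebra.adjoin 𝔽 S ≤ (auxAlg 𝔽 T2 h02 hT2).comap (auxPhi 𝔽 n d p) := by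
    apply Algebra.adjoin_le
    intro f hf
    have hf1 : f ∈ invOminus 𝔽 n d := hgen ▸ Algebra.subset_adjoin hf
    rintro s (hs | rfl)
    · exact hA1 hf1 s hs
    · change MvPolynomial.coeff one (auxPhi 𝔽 n d p f) = 0
      by_cases hf0 : f = 0
      · simp [hf0]
      obtain ⟨k, hk⟩ := hhom f hf
      have hlt := hcon f hf
      rw [hk.totalDegree hf0] at hlt
      have hh : (auxPhi 𝔽 n d p f).IsHomogeneous (1 * k) := by
        unfold auxPhi
        apply hk.aeval
        intro x
        simpa using (MvPolynomial.isHomogeneous_X 𝔽 x.2.2).mul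
          (MvPolynomial.isHomogeneous_C (Fin d) (auxM 𝔽 n d p x.2.2 x.1 x.2.1))
      apply hh.coeff_eq_zero
      rw [Finsupp.degree_eq_sum]
      simp only [hone]
      simp; omega
  -- the trace of the full product
  let ks := List.finRange d
  have hmem : sigmaCoeff 1 (ks.map (XgenSkew 𝔽 n d)).prod ∈ invOminus 𝔽 n d := by
    apply Algebra.subset_adjoin
    refine ⟨1, le_rfl, by omega, _, ?_, ?_, rfl⟩
    · simp [ks]; omega
    · intro m hm
      obtain ⟨k, _, rfl⟩ := List.mem_map.mp hm
      exact ⟨k, rfl⟩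
  rw [← hgen] at hmem
  have hfin : MvPolynomial.coeff one
      (auxPhi 𝔽 n d p (sigmaCoeff 1 (ks.map (XgenSkew 𝔽 n d)).prod)) = 0 := hA2 hmem one (Or.inr rfl)
  have hsum : (ks.map fun k => Finsupp.single k 1).sum = one := by
    ext k
    rw [← Fin.sum_univ_def, Finsupp.finset_sum_apply]
    simp [Finsupp.single_apply, hone]
  have hprod : (ks.map (auxM 𝔽 n d p)).prod = auxD 𝔽 n 1 * auxJ 𝔽 n p ^ d := by
    obtain ⟨e, rfl⟩ : ∃ e, d = e + 1 := ⟨d - 1, by omega⟩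
    simp only [ks, List.finRange_succ, List.map_cons, List.prod_cons, List.map_map]
    have : (List.finRange e).map (auxM 𝔽 n (e + 1) p ∘ Fin.succ)
        = List.replicate e (auxJ 𝔽 n p) := by
      rw [List.eq_replicate_iff]
      refine ⟨by simp, ?_⟩
      intro b hb
      obtain ⟨k, hk, rfl⟩ := List.mem_map.mp hb
      simp [auxM]
    rw [this, List.prod_replicate, pow_succ']
    simp [auxM, mul_assoc]
  rw [auxPhi_sigma 𝔽 n d p 1 (by omega), hsum, one_smul, MvPolynomial.coeff_monomial,
    if_pos rfl, hprod] at hfin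
  have htr := Matrix.trace_eq_neg_charpoly_coeff (auxD 𝔽 n 1 * auxJ 𝔽 n p ^ d)
  rw [Fintype.card_fin] at htr
  obtain ⟨l, hl⟩ := hdeven
  obtain ⟨l, rfl⟩ : ∃ l', l = l' + 1 := ⟨l - 1, by omega⟩
  have hfin2 : (auxD 𝔽 n 1 * auxJ 𝔽 n p ^ d).trace = 0 := by
    rw [htr]; simpa using hfin
  rw [show d = 2 * (l + 1) by omega, auxJ_pow_even 𝔽 n p hpn, mul_smul_comm,
    auxD_mul 𝔽 n p 1 hp1, Matrix.trace_smul, auxD_trace 𝔽 n 1 (by omega)] at hfin2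
  simp [h2F] at hfin2

end
end

section
/- Let 𝔽 be an infinite field of characteristic p with 0 < p ≤ n and p ≠ 2, and let d ≥ 1. Then the invariant tr((X₁ + X₁ᵀ)(X₂ + X₂ᵀ) ⋯ (X_d + X_dᵀ)) is indecomposable in R^{O(n)}; that is, it does not lie in the 𝔽-span of products g·h with g, h ∈ R^{O(n)} homogeneous of positive degree. -/
open Matrix
noncomputable section

theorem aux_ring (𝔽 : Type) [Field 𝔽] (d : ℕ) :
    ∃ (S : Type) (_ : CommRing S) (_ : Algebra 𝔽 S) (e : Fin d → S),
      (∀ k, e k ^ 2 = 0) ∧ (List.ofFn e).prod ≠ 0 := by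
  let J : Ideal (MvPolynomial (Fin d) 𝔽) :=
    Ideal.span ((fun s => MvPolynomial.monomial s (1 : 𝔽)) ''
      (Set.range fun k : Fin d => Finsupp.single k 2))
  refine ⟨MvPolynomial (Fin d) 𝔽 ⧸ J, inferInstance, inferInstance,
    fun k => Ideal.Quotient.mk J (MvPolynomial.X k), ?_, ?_⟩
  · intro k
    rw [← map_pow, Ideal.Quotient.eq_zero_iff_mem]
    apply Ideal.subset_span
    refine ⟨Finsupp.single k 2, ⟨k, rfl⟩, ?_⟩
    simp [MvPolynomial.X_pow_eq_monomial]
  · rw [List.prod_ofFn, ← map_prod, Ne, Ideal.Quotient.eq_zero_iff_mem]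
    intro h
    rw [MvPolynomial.mem_ideal_span_monomial_image] at h
    have hm : (∏ i : Fin d, (MvPolynomial.X i : MvPolynomial (Fin d) 𝔽))
        = MvPolynomial.monomial (∑ i : Fin d, Finsupp.single i 1) 1 := by
      rw [MvPolynomial.monomial_sum_one]
      rfl
    rw [hm] at h
    obtain ⟨s, ⟨k, rfl⟩, hk⟩ := h (∑ i : Fin d, Finsupp.single i 1) (by
      classical
      rw [MvPolynomial.support_monomial]; simp)
    have := hk k
    simp [Finsupp.finsetSum_apply, Finsupp.single_apply] at this

theorem aux_coeff {S : Type} [CommRing S] [Nontrivial S] {n t : ℕ} (ht : 1 ≤ t) (htn : t ≤ n)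
    (c : S) (hc : c ^ 2 = 0) (D : Matrix (Fin n) (Fin n) S) :
    (c • D).charpoly.coeff (n - t) = if t = 1 then - (c * D.trace) else 0 := by
  have h0 : ∀ M : Matrix (Fin n) (Fin n) S, M.charpoly.coeff (n - t) = M.charpolyRev.coeff t := by
    intro M
    rw [← Matrix.reverse_charpoly, Polynomial.coeff_reverse, Matrix.charpoly_natDegree_eq_dim,
      Fintype.card_fin, Polynomial.revAt_le htn]
  split_ifs with h
  · subst h
    have : Nonempty (Fin n) := ⟨⟨0, by omega⟩⟩
    have := Matrix.trace_eq_neg_charpoly_coeff (c • D)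
    rw [Matrix.trace_smul, Fintype.card_fin, smul_eq_mul] at this
    rw [this, neg_neg]
  · rw [h0]
    have h1 : (c • D).charpolyRev = (D.charpolyRev).comp (Polynomial.C c * Polynomial.X) := by
      rw [Matrix.charpolyRev, Matrix.charpolyRev, ← Polynomial.coe_compRingHom_apply,
        RingHom.map_det]
      congr 1
      ext1 i j
      by_cases hij : i = j
      · subst hij; simp [Matrix.one_apply]; ring
      · simp [Matrix.one_apply, hij]; ring
    rw [h1, Polynomial.comp_C_mul_X_coeff]
    obtain ⟨r, rfl⟩ : ∃ r, t = r + 2 := ⟨t - 2, by omega⟩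
    rw [pow_add, hc]; simp

theorem aux_word {S M : Type} [CommRing S] [Ring M] [Algebra S M] {d : ℕ}
    (k0 : Fin d) (e : Fin d → S) (he : ∀ k, e k ^ 2 = 0) (P E : M)
    (hPP : P * P = P) (hPE : P * E = E) (hEP : E * P = E) (hEE : E * E = E)
    (w : List M) (hw : w ≠ []) (h : ∀ m ∈ w, ∃ k, m = e k • (if k = k0 then E else P)) :
    ∃ c D, w.prod = c • D ∧ c ^ 2 = 0 ∧ (D = P ∨ D = E ∧ e k0 ∣ c) := by
  induction w with
  | nil => exact absurd rfl hw
  | cons a l ih =>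
    have ha : ∃ c D, a = c • D ∧ c ^ 2 = 0 ∧ (D = P ∨ D = E ∧ e k0 ∣ c) := by
      obtain ⟨k, rfl⟩ := h a (by simp)
      refine ⟨_, _, rfl, he k, ?_⟩
      split_ifs with hk
      · subst hk; exact Or.inr ⟨rfl, dvd_rfl⟩
      · exact Or.inl rfl
    rcases eq_or_ne l [] with rfl | hl
    · simpa using ha
    · obtain ⟨c', D', h1, h2, h3⟩ := ih hl (fun m hm => h m (by simp [hm]))
      obtain ⟨c, D, rfl, h5, h6⟩ := ha
      refine ⟨c * c', D * D', by rw [List.prod_cons, h1, smul_mul_smul_comm], by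
        rw [mul_pow, h5, zero_mul], ?_⟩
      rcases h3 with rfl | ⟨rfl, h3⟩ <;> rcases h6 with rfl | ⟨rfl, h6⟩
      · exact Or.inl hPP
      · exact Or.inr ⟨hEP, h6.mul_right _⟩
      · exact Or.inr ⟨hPE, h3.mul_left _⟩
      · exact Or.inr ⟨hEE, h3.mul_left _⟩

theorem aux_prod {S M : Type} [CommRing S] [Ring M] [Algebra S M] (P E : M)
    (hEP : E * P = E) (l : List S) : E * (l.map (fun c => c • P)).prod = l.prod • E := by
  induction l with
  | nil => simp
  | cons a l ih =>
    rw [List.map_cons, List.prod_cons, List.prod_cons, ← mul_assoc, mul_smul_comm, hEP,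
      smul_mul_assoc, ih, smul_smul]

theorem aux_prod2 {S : Type} [CommRing S] {d : ℕ} (e : Fin d → S) :
    (List.ofFn fun k => 2 * e k).prod = 2 ^ d * (List.ofFn e).prod := by
  simp [List.prod_ofFn, Finset.prod_mul_distrib]

theorem trace_prod_sum_transpose_indecomposable
    (𝔽 : Type) [Field 𝔽] [Infinite 𝔽] (n d : ℕ) (hn : 2 ≤ n) (hd : 1 ≤ d)
    (hp0 : 0 < ringChar 𝔽) (hpn : ringChar 𝔽 ≤ n) (hp2 : ringChar 𝔽 ≠ 2) :
    ¬ Decomposable 𝔽 (invO 𝔽 n d)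
      (Matrix.trace (List.ofFn (fun k : Fin d =>
        Xgen 𝔽 n d k + (Xgen 𝔽 n d k)ᵀ)).prod) := by
  obtain ⟨S, _, _, e, he, hne⟩ := aux_ring 𝔽 d
  have : Nontrivial S := ⟨_, _, hne⟩
  obtain ⟨m, rfl⟩ : ∃ m, d = m + 1 := ⟨d - 1, by omega⟩
  set p := ringChar 𝔽 with hp
  let vP : Fin n → S := fun i => if i.val < p then 1 else 0
  let vE : Fin n → S := fun i => if i.val = 0 then 1 else 0
  let P : Matrix (Fin n) (Fin n) S := Matrix.diagonal vP
  let E : Matrix (Fin n) (Fin n) S := Matrix.diagonal vE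
  have hPP : P * P = P := by
    simp only [P, Matrix.diagonal_mul_diagonal]; congr 1; ext i; simp [vP]
  have hEE : E * E = E := by
    simp only [E, Matrix.diagonal_mul_diagonal]; congr 1; ext i; simp [vE]
  have hPE : P * E = E := by
    simp only [P, E, Matrix.diagonal_mul_diagonal]; congr 1; ext i; simp only [vP, vE]
    split_ifs <;> first | omega | simp
  have hEP : E * P = E := by
    simp only [P, E, Matrix.diagonal_mul_diagonal]; congr 1; ext i; simp only [vP, vE]
    split_ifs <;> first | omega | simp
  have htP : P.trace = 0 := by
    have h1 : P.trace = ((p : ℕ) : S) := by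
      simp only [P, Matrix.trace_diagonal, vP]
      rw [Fin.sum_univ_eq_sum_range (fun i => if i < p then (1 : S) else 0) n, ← Finset.sum_filter]
      have : (Finset.range n).filter (fun i => i < p) = Finset.range p := by
        ext i; simp; omega
      rw [this]; simp
    rw [h1, ← map_natCast (algebraMap 𝔽 S), hp, ringChar.Nat.cast_ringChar, map_zero]
  have htE : E.trace = 1 := by
    simp only [E, Matrix.trace_diagonal, vE]
    rw [Finset.sum_eq_single ⟨0, by omega⟩]
    · simp
    · intro b _ hb
      rw [if_neg]
      intro h; exact hb (Fin.ext h)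
    · simp
  let φ : Rpoly 𝔽 n (m + 1) →ₐ[𝔽] S := MvPolynomial.aeval
    (fun q => e q.2.2 * (if q.2.2 = 0 then E else P) q.1 q.2.1)
  have hX : ∀ k, (Xgen 𝔽 n (m + 1) k).map φ = e k • (if k = 0 then E else P) := by
    intro k; ext i j; simp [Xgen, φ]
  have hXT : ∀ k, ((Xgen 𝔽 n (m + 1) k)ᵀ).map φ = e k • (if k = 0 then E else P) := by
    intro k
    rw [Matrix.transpose_map, hX, Matrix.transpose_smul]
    split_ifs <;> simp [E, P]
  have hmapprod : ∀ w : List (Matrix (Fin n) (Fin n) (Rpoly 𝔽 n (m + 1))),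
      w.prod.map φ = (w.map (fun M => M.map φ)).prod := by
    intro w
    exact map_list_prod φ.mapMatrix w
  -- main containment
  have key : ∀ g ∈ invO 𝔽 n (m + 1),
      e 0 ∣ φ g - algebraMap 𝔽 S (MvPolynomial.constantCoeff g) := by
    intro g hg
    induction hg using Algebra.adjoin_induction with
    | mem x hx =>
      obtain ⟨t, ht, htn, w, hw, hm, rfl⟩ := hx
      have hcc : MvPolynomial.constantCoeff (sigmaCoeff t w.prod) = 0 := by
        have hz : w.prod.map (MvPolynomial.constantCoeff (R := 𝔽)) = 0 := by
          have h1 : w.prod.map (MvPolynomial.constantCoeff (R := 𝔽)) =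
              (w.map (fun M => M.map (MvPolynomial.constantCoeff (R := 𝔽)))).prod :=
            map_list_prod (MvPolynomial.constantCoeff (R := 𝔽)).mapMatrix w
          rw [h1]
          apply List.prod_eq_zero
          obtain ⟨a, ha⟩ := List.exists_mem_of_ne_nil w hw
          rw [List.mem_map]
          refine ⟨a, ha, ?_⟩
          rcases hm a ha with ⟨k, rfl⟩ | ⟨k, rfl⟩ <;> ext i j <;> simp [Xgen]
        rw [sigmaCoeff, map_mul, ← Polynomial.coeff_map, ← Matrix.charpoly_map, hz,
          Matrix.charpoly_zero, Polynomial.coeff_X_pow, if_neg, mul_zero]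
        rw [Fintype.card_fin]; omega
      rw [hcc, map_zero, sub_zero]
      obtain ⟨c, D, h1, h2, h3⟩ := aux_word (0 : Fin (m + 1)) e he P E hPP hPE hEP hEE
        (w.map (fun M => M.map φ)) (by simpa using hw) (by
          intro M hM
          rw [List.mem_map] at hM
          obtain ⟨a, ha, rfl⟩ := hM
          rcases hm a ha with ⟨k, rfl⟩ | ⟨k, rfl⟩
          · exact ⟨k, hX k⟩
          · exact ⟨k, hXT k⟩)
      have h4 : φ (w.prod.charpoly.coeff (n - t)) = (c • D).charpoly.coeff (n - t) := by
        rw [← h1, ← hmapprod]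
        have := Matrix.charpoly_map w.prod (φ : Rpoly 𝔽 n (m + 1) →+* S)
        have h5 := congrArg (fun q => q.coeff (n - t)) this
        simp only [Polynomial.coeff_map] at h5
        exact h5.symm
      rw [sigmaCoeff, map_mul, h4, aux_coeff ht htn c h2]
      apply Dvd.dvd.mul_left
      split_ifs
      · rw [dvd_neg]
        rcases h3 with rfl | ⟨rfl, h3⟩
        · rw [htP, mul_zero]; exact dvd_zero _
        · exact h3.mul_right _
      · exact dvd_zero _
    | algebraMap r => simp [MvPolynomial.algebraMap_eq]
    | add x y _ _ hx hy =>
      convert dvd_add hx hy using 1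
      simp only [map_add]; ring
    | mul x y _ _ hx hy =>
      convert dvd_add (hx.mul_right (φ y))
        (hy.mul_left (algebraMap 𝔽 S (MvPolynomial.constantCoeff x))) using 1
      simp only [map_mul]; ring
  have key2 : ∀ g ∈ invO 𝔽 n (m + 1), (∃ i, 0 < i ∧ MvPolynomial.IsHomogeneous g i) →
      e 0 ∣ φ g := by
    rintro g hg ⟨i, hi, hh⟩
    have := key g hg
    have h0 : MvPolynomial.constantCoeff g = 0 := by
      rw [MvPolynomial.constantCoeff_eq]
      apply hh.coeff_eq_zero
      simp; omega
    rwa [h0, map_zero, sub_zero] at this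
  intro hdec
  have hle : Submodule.span 𝔽
      {x : Rpoly 𝔽 n (m + 1) | ∃ g ∈ invO 𝔽 n (m + 1), ∃ h ∈ invO 𝔽 n (m + 1),
      (∃ i, 0 < i ∧ MvPolynomial.IsHomogeneous g i) ∧
      (∃ j, 0 < j ∧ MvPolynomial.IsHomogeneous h j) ∧ x = g * h} ≤
      LinearMap.ker φ.toLinearMap := by
    rw [Submodule.span_le]
    rintro x ⟨g, hg, h, hh, h1, h2, rfl⟩
    obtain ⟨a, ha⟩ := key2 g hg h1
    obtain ⟨b, hb⟩ := key2 h hh h2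
    simp only [SetLike.mem_coe, LinearMap.mem_ker, AlgHom.toLinearMap_apply, map_mul, ha, hb]
    linear_combination (a * b) * he 0
  have hz : φ (Matrix.trace (List.ofFn (fun k : Fin (m + 1) =>
        Xgen 𝔽 n (m + 1) k + (Xgen 𝔽 n (m + 1) k)ᵀ)).prod) = 0 := hle hdec
  have hval : φ (Matrix.trace (List.ofFn (fun k : Fin (m + 1) =>
        Xgen 𝔽 n (m + 1) k + (Xgen 𝔽 n (m + 1) k)ᵀ)).prod)
        = 2 ^ (m + 1) * (List.ofFn e).prod := by
    have h1 : ∀ M : Matrix (Fin n) (Fin n) (Rpoly 𝔽 n (m + 1)), φ M.trace = (M.map φ).trace := by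
      intro M; simp [Matrix.trace]
    have h2 : ∀ k, (Xgen 𝔽 n (m + 1) k + (Xgen 𝔽 n (m + 1) k)ᵀ).map φ =
        (2 * e k) • (if k = 0 then E else P) := by
      intro k
      rw [Matrix.map_add φ (map_add φ), hX, hXT, ← add_smul, two_mul]
    rw [h1, hmapprod, List.map_ofFn]
    have h3 : ((fun M : Matrix (Fin n) (Fin n) (Rpoly 𝔽 n (m + 1)) => M.map φ) ∘
        fun k : Fin (m + 1) => Xgen 𝔽 n (m + 1) k + (Xgen 𝔽 n (m + 1) k)ᵀ) =
        fun k => (2 * e k) • (if k = 0 then E else P) := funext h2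
    rw [h3, List.ofFn_succ, List.prod_cons]
    simp only [if_true, Fin.succ_ne_zero, if_false]
    have h4 : (List.ofFn fun i : Fin m => (2 * e i.succ) • P) =
        (List.ofFn fun i : Fin m => 2 * e i.succ).map (fun c => c • P) := by
      rw [List.map_ofFn]; rfl
    rw [h4, smul_mul_assoc, aux_prod P E hEP, smul_smul, Matrix.trace_smul, htE, ← aux_prod2,
      List.ofFn_succ, List.prod_cons, smul_eq_mul, mul_one]
  rw [hval] at hz
  have h2 : (2 : 𝔽) ≠ 0 := Ring.two_ne_zero hp2
  have hu : IsUnit ((2 : S) ^ (m + 1)) := by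
    have := (IsUnit.mk0 _ (pow_ne_zero (m + 1) h2)).map (algebraMap 𝔽 S)
    rwa [map_pow, map_ofNat] at this
  exact hne ((hu.mul_right_eq_zero).1 hz)

end
end
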